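/- (Tverberg theorem for boundaries of convex polytopes.) Let r be a power of a prime and d ≥ 1. Then the boundary complex of any convex polytope of dimension (d+1)(r−1) admits no almost r-embedding into ℝ^d; that is, for every continuous map f from the boundary of the polytope to ℝ^d there exist pairwise disjoint proper faces σ_1, …, σ_r of the polytope with f(σ_1) ∩ … ∩ f(σ_r) ≠ ∅. -/

import Mathlib

/-!
The vertices of an `N`-dimensional polytope can be coloured with `N + 1` colours so that every sign
pattern on the colours is realised by a linear functional on the cone over the polytope. A point of
the simplex spanned by the colours gives a weighted sum of the generators of this cone, which is
then pushed away from the generators of small weight until it lies on a face without generators of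
weight zero; the functional which is positive exactly on the colours of large weight shows that the
result is not the apex. This gives a continuous map from the boundary of the simplex to that of the
polytope under which points with disjoint supports go to disjoint faces, and reduces the theorem to
the topological Tverberg theorem for `f` composed with this map.

For the latter let `A = (ℤ/p)ⁿ` act on the deleted join of `pⁿ` copies of the simplex. If no point
of the deleted join has `pⁿ` equal images, then some coordinate of the images has a gap, and the
coordinate, the size and the position of the gap label the points equivariantly and locally
constantly. Subdivided chains in the deleted join are thereby mapped to chains of labels with
distinct colours, of which there are none with more than `(d + 1) * (pⁿ - 1)` vertices. The
stabilisers of the labels may be non-trivial, but the nilpotent element `t = ∑ αᵢ (bᵢ - 1)` of the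
group ring acts on the chains of labels as on a free module for generic `αᵢ` in a large field of
characteristic `p`, because a derivation has an invertible commutator with it. So a periodic
resolution with differentials `t` and `t ^ (p - 1)` can be compared with the chains of labels as if
the action were free.
-/

namespace Tverberg

open Module Filter Topology
open scoped Pointwise

/-! ### An exterior complex of labels -/

section Commutator

lemma lie_pow_succ_of_commute {R : Type*} [Ring R] {D t : R} (h : Commute ⁅D, t⁆ t) (n : ℕ) :
    ⁅D, t ^ (n + 1)⁆ = (n + 1) • (⁅D, t⁆ * t ^ n) := by
  induction n with
  | zero => simp
  | succ n ih =>
    have leibniz : ⁅D, t ^ (n + 1) * t⁆ = ⁅D, t ^ (n + 1)⁆ * t + t ^ (n + 1) * ⁅D, t⁆ := by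
      simp only [Ring.lie_def]; noncomm_ring
    rw [pow_succ t (n + 1), leibniz, ih, smul_mul_assoc, mul_assoc, ← pow_succ,
      ← (h.pow_right (n + 1)).eq, succ_nsmul _ (n + 1)]

variable {K V : Type*} [Field K] [AddCommGroup V] [Module K V] {D t : End K V} {m e : ℕ}

lemma ker_pow_le_range (p : ℕ) [CharP K p] (hunit : IsUnit ⁅D, t⁆) (hcomm : Commute ⁅D, t⁆ t)
    (he : e < p) : LinearMap.ker (t ^ e) ≤ LinearMap.range t := by
  obtain ⟨u, hu⟩ := hunit
  have hinv : Commute (↑u⁻¹ : End K V) t := (hu ▸ hcomm).units_inv_left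
  have inv_apply (x : V) : (↑u⁻¹ : End K V) (⁅D, t⁆ x) = x := by
    rw [← hu, ← End.mul_apply, Units.inv_mul, End.one_apply]
  induction e with
  | zero => intro y hy; simp_all
  | succ e ih =>
    intro y hy
    rw [LinearMap.mem_ker] at hy
    have hne : ((e + 1 : ℕ) : K) ≠ 0 := fun h ↦
      (Nat.le_of_dvd e.succ_pos ((CharP.cast_eq_zero_iff K p _).1 h)).not_gt he
    have hD : -(t ^ (e + 1)) (D y) = ((e + 1 : ℕ) : K) • ⁅D, t⁆ ((t ^ e) y) := by
      rw [Nat.cast_smul_eq_nsmul, ← zero_sub, ← map_zero D, ← hy]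
      exact LinearMap.congr_fun (lie_pow_succ_of_commute hcomm e) y
    let w : V := -((e + 1 : ℕ) : K)⁻¹ • (↑u⁻¹ : End K V) (D y)
    have hw : (t ^ e) y = (t ^ (e + 1)) w := by
      have hswap : (t ^ (e + 1)) ((↑u⁻¹ : End K V) (D y))
          = (↑u⁻¹ : End K V) ((t ^ (e + 1)) (D y)) :=
        (LinearMap.congr_fun (hinv.pow_right (e + 1)).eq (D y)).symm
      rw [map_smul, hswap, neg_smul, ← smul_neg, ← map_neg, hD, map_smul, inv_apply,
        inv_smul_smul₀ hne]
    obtain ⟨z, hz⟩ := ih (Nat.lt_of_succ_lt he) (x := y - t w) (by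
      rw [LinearMap.mem_ker, map_sub, hw, pow_succ, End.mul_apply, sub_self])
    exact ⟨z + w, by rw [map_add, hz, sub_add_cancel]⟩

lemma ker_pow_le_range_pow (p : ℕ) [CharP K p] (hunit : IsUnit ⁅D, t⁆)
    (hcomm : Commute ⁅D, t⁆ t) (h : m + e ≤ p) :
    LinearMap.ker (t ^ e) ≤ LinearMap.range (t ^ m) := by
  intro y hy
  induction m with
  | zero => exact ⟨y, rfl⟩
  | succ m ih =>
    obtain ⟨z, rfl⟩ := ih (by omega)
    have hz : z ∈ LinearMap.ker (t ^ (e + m)) := by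
      rwa [LinearMap.mem_ker, pow_add, End.mul_apply]
    obtain ⟨w, rfl⟩ := ker_pow_le_range p hunit hcomm (by omega) hz
    exact ⟨w, by rw [pow_succ, End.mul_apply]⟩

lemma exists_mem_pow_apply_eq (p : ℕ) [CharP K p] {W : Submodule K V}
    (ht : ∀ x ∈ W, t x ∈ W) (hD : ∀ x ∈ W, D x ∈ W)
    (hcomm : ∀ x ∈ W, ⁅D, t⁆ (t x) = t (⁅D, t⁆ x)) {q : ℕ} (hq : q ≠ 0)
    (hpow : ∀ x ∈ W, (⁅D, t⁆ ^ q) x = x) (h : m + e ≤ p) {y : V} (hy : y ∈ W)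
    (hty : (t ^ e) y = 0) : ∃ z ∈ W, (t ^ m) z = y := by
  have hL : ∀ x ∈ W, ⁅D, t⁆ x ∈ W := fun x hx ↦
    W.sub_mem (hD _ (ht _ hx)) (ht _ (hD _ hx))
  have lie_eq : ⁅D.restrict hD, t.restrict ht⁆ = ⁅D, t⁆.restrict hL := rfl
  have hcomm' : Commute ⁅D.restrict hD, t.restrict ht⁆ (t.restrict ht) :=
    LinearMap.ext fun x ↦ Subtype.ext (hcomm x x.2)
  have hunit : IsUnit ⁅D.restrict hD, t.restrict ht⁆ := by
    refine IsUnit.of_pow_eq_one (n := q) (LinearMap.ext fun x ↦ Subtype.ext ?_) hq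
    rw [lie_eq, End.pow_restrict]
    exact hpow x x.2
  have hker : (⟨y, hy⟩ : W) ∈ LinearMap.ker (t.restrict ht ^ e) := by
    rw [LinearMap.mem_ker, End.pow_restrict]
    exact Subtype.ext hty
  obtain ⟨z, hz⟩ := ker_pow_le_range_pow p hunit hcomm' h hker
  rw [End.pow_restrict] at hz
  exact ⟨z, z.2, congrArg Subtype.val hz⟩

end Commutator

section ExteriorDerivation

variable {R M : Type*} [CommRing R] [AddCommGroup M] [Module R M]

/-- The algebra map `v ↦ v + ε f v` from the exterior algebra to the dual numbers over it, whose
`ε`-component is a derivation. -/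
noncomputable def dualNumberLift (f : End R M) :
    ExteriorAlgebra R M →ₐ[R] TrivSqZeroExt (ExteriorAlgebra R M) (ExteriorAlgebra R M) :=
  ExteriorAlgebra.lift R
    ⟨(TrivSqZeroExt.inlAlgHom R (ExteriorAlgebra R M) (ExteriorAlgebra R M)).toLinearMap ∘ₗ
        ExteriorAlgebra.ι R +
      (TrivSqZeroExt.inrHom (ExteriorAlgebra R M) (ExteriorAlgebra R M)).restrictScalars R ∘ₗ
        ExteriorAlgebra.ι R ∘ₗ f, fun v ↦ by
      ext
      · simp
      · simp [ExteriorAlgebra.ι_add_mul_swap]⟩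

/-- The derivation of the exterior algebra that extends an endomorphism `f` of the module. -/
noncomputable def exteriorDerivation (f : End R M) : End R (ExteriorAlgebra R M) :=
  (TrivSqZeroExt.sndHom (ExteriorAlgebra R M) (ExteriorAlgebra R M)).restrictScalars R ∘ₗ
    (dualNumberLift f).toLinearMap

variable (f : End R M)

lemma exteriorDerivation_one : exteriorDerivation f 1 = 0 := by
  simp [exteriorDerivation]

lemma exteriorDerivation_ι_mul (v : M) (x : ExteriorAlgebra R M) :
    exteriorDerivation f (ExteriorAlgebra.ι R v * x)
      = ExteriorAlgebra.ι R v * exteriorDerivation f x + ExteriorAlgebra.ι R (f v) * x := by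
  have hfst : (TrivSqZeroExt.fstHom R (ExteriorAlgebra R M) (ExteriorAlgebra R M)).comp
      (dualNumberLift f) = AlgHom.id R _ := by
    ext v
    simp [dualNumberLift]
  have hx : (dualNumberLift f x).fst = x := DFunLike.congr_fun hfst x
  have hv : dualNumberLift f (ExteriorAlgebra.ι R v) =
      TrivSqZeroExt.inl (ExteriorAlgebra.ι R v) +
        TrivSqZeroExt.inr (ExteriorAlgebra.ι R (f v)) := by
    simp [dualNumberLift]
  simp [exteriorDerivation, hv, hx]

end ExteriorDerivation

section Wedge

variable {R L : Type*} [CommRing R]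

/-- The exterior product of the basis vectors of the free module on `L` listed by `l`. -/
noncomputable def wedge (R : Type*) [CommRing R] {L : Type*} (l : List L) :
    ExteriorAlgebra R (L →₀ R) :=
  (l.map fun v ↦ ExteriorAlgebra.ι R (Finsupp.single v 1)).prod

@[simp]
lemma wedge_nil : wedge R ([] : List L) = 1 := rfl

@[simp]
lemma wedge_cons (v : L) (l : List L) :
    wedge R (v :: l) = ExteriorAlgebra.ι R (Finsupp.single v 1) * wedge R l :=
  List.prod_cons

lemma wedge_append (l₁ l₂ : List L) : wedge R (l₁ ++ l₂) = wedge R l₁ * wedge R l₂ := by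
  simp [wedge]

lemma wedge_eq_zero_of_not_nodup {l : List L} (h : ¬ l.Nodup) : wedge R l = 0 := by
  have wedge_eq : wedge R l = ExteriorAlgebra.ιMulti R l.length
      fun i ↦ Finsupp.single (l.get i) 1 := by
    rw [ExteriorAlgebra.ιMulti_apply, wedge]
    conv_lhs => rw [← List.ofFn_get l, List.map_ofFn]
    rfl
  rw [List.nodup_iff_injective_get] at h
  rw [wedge_eq]
  exact ExteriorAlgebra.ιMulti_eq_zero_of_not_inj fun hinj ↦
    h (Function.Injective.of_comp (f := fun v ↦ Finsupp.single v (1 : R)) hinj)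

lemma exteriorDerivation_diagonal_wedge (φ : L → R) (l : List L) :
    exteriorDerivation (Finsupp.linearCombination R fun v ↦ Finsupp.single v (φ v)) (wedge R l)
      = (l.map φ).sum • wedge R l := by
  induction l with
  | nil => simp [exteriorDerivation_one]
  | cons v l ih =>
    have hv : Finsupp.single v (φ v) = φ v • Finsupp.single v 1 := by simp
    rw [wedge_cons, exteriorDerivation_ι_mul, ih, Finsupp.linearCombination_single, one_smul, hv,
      map_smul, mul_smul_comm, smul_mul_assoc, ← add_smul, List.map_cons, List.sum_cons, add_comm]

/-- The simplicial boundary, `∂(v₀ ∧ ⋯ ∧ vₙ) = ∑ (-1)ⁱ v₀ ∧ ⋯ v̂ᵢ ⋯ ∧ vₙ`: contraction with the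
linear form that is `1` on every vertex. -/
noncomputable def boundary (R L : Type*) [CommRing R] : End R (ExteriorAlgebra R (L →₀ R)) :=
  CliffordAlgebra.contractLeft (Finsupp.linearCombination R fun _ ↦ 1)

lemma boundary_one : boundary R L 1 = 0 := CliffordAlgebra.contractLeft_one _ _

lemma boundary_ι_mul (v : L →₀ R) (x : ExteriorAlgebra R (L →₀ R)) :
    boundary R L (ExteriorAlgebra.ι R v * x) =
      Finsupp.linearCombination R (fun _ ↦ (1 : R)) v • x -
        ExteriorAlgebra.ι R v * boundary R L x :=
  CliffordAlgebra.contractLeft_ι_mul _ v x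

lemma boundary_boundary (x : ExteriorAlgebra R (L →₀ R)) : boundary R L (boundary R L x) = 0 :=
  CliffordAlgebra.contractLeft_contractLeft _ _

end Wedge

section Representations

variable {R G : Type*} [CommRing R] [Monoid G] {M N : Type*} [AddCommGroup M] [Module R M]
  [AddCommGroup N] [Module R N]

lemma asAlgebraHom_mem {ρ : Representation R G M} {W : Submodule R M}
    (hW : ∀ g, ∀ x ∈ W, ρ g x ∈ W) (a : MonoidAlgebra R G) {x : M} (hx : x ∈ W) :
    ρ.asAlgebraHom a x ∈ W := by
  induction a using MonoidAlgebra.induction_on with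
  | of g => rw [Representation.asAlgebraHom_of]; exact hW g x hx
  | add a b ha hb => rw [map_add]; exact W.add_mem ha hb
  | smul c a ha => rw [map_smul]; exact W.smul_mem c ha

lemma map_asAlgebraHom {ρ : Representation R G M} {σ : Representation R G N} {f : M →ₗ[R] N}
    {x : M} (hf : ∀ g, f (ρ g x) = σ g (f x)) (a : MonoidAlgebra R G) :
    f (ρ.asAlgebraHom a x) = σ.asAlgebraHom a (f x) := by
  induction a using MonoidAlgebra.induction_on with
  | of g => simpa only [Representation.asAlgebraHom_of] using hf g
  | add a b ha hb => simp only [map_add, LinearMap.add_apply, ha, hb]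
  | smul c a ha => simp only [map_smul, LinearMap.smul_apply, ha]

/-- The action of `G` on the exterior algebra induced by a representation. -/
noncomputable def exteriorRep (ρ : Representation R G M) :
    Representation R G (ExteriorAlgebra R M) where
  toFun g := (ExteriorAlgebra.map (ρ g)).toLinearMap
  map_one' := by rw [map_one]; exact congrArg AlgHom.toLinearMap ExteriorAlgebra.map_id
  map_mul' g h := by
    rw [map_mul, End.mul_eq_comp, ← ExteriorAlgebra.map_comp_map]
    rfl

lemma exteriorRep_one (ρ : Representation R G M) (g : G) : exteriorRep ρ g 1 = 1 :=
  map_one (ExteriorAlgebra.map (ρ g))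

lemma exteriorRep_ι_mul (ρ : Representation R G M) (g : G) (v : M) (x : ExteriorAlgebra R M) :
    exteriorRep ρ g (ExteriorAlgebra.ι R v * x) =
      ExteriorAlgebra.ι R (ρ g v) * exteriorRep ρ g x := by
  simp [exteriorRep]

/-- The representation on the free module over a `G`-set `X` that permutes the basis. -/
noncomputable def permutationRep (R G X : Type*) [CommRing R] [Monoid G] [MulAction G X] :
    Representation R G (X →₀ R) where
  toFun g := Finsupp.lmapDomain R R (g • ·)
  map_one' := by ext; simp
  map_mul' g h := by ext; simp [mul_smul]

variable {L : Type*} [MulAction G L]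

@[simp]
lemma permutationRep_single (g : G) (v : L) (c : R) :
    permutationRep R G L g (Finsupp.single v c) = Finsupp.single (g • v) c :=
  Finsupp.mapDomain_single

lemma exteriorRep_wedge (g : G) (l : List L) :
    exteriorRep (permutationRep R G L) g (wedge R l) = wedge R (l.map (g • ·)) := by
  induction l with
  | nil => exact exteriorRep_one _ g
  | cons v l ih =>
    rw [wedge_cons, exteriorRep_ι_mul, permutationRep_single, ih, List.map_cons, wedge_cons]

lemma boundary_exteriorRep (g : G) (x : ExteriorAlgebra R (L →₀ R)) :
    boundary R L (exteriorRep (permutationRep R G L) g x) =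
      exteriorRep (permutationRep R G L) g (boundary R L x) := by
  have augmentation_invariant :
      Finsupp.linearCombination R (fun _ : L ↦ (1 : R)) ∘ₗ permutationRep R G L g =
        Finsupp.linearCombination R fun _ ↦ 1 := by
    ext; simp
  induction x using CliffordAlgebra.left_induction with
  | algebraMap c => simp [Algebra.algebraMap_eq_smul_one, exteriorRep_one, boundary_one]
  | add x y hx hy => simp only [map_add, hx, hy]
  | ι_mul x v hx =>
    change boundary R L (exteriorRep _ g (ExteriorAlgebra.ι R v * x)) =
      exteriorRep _ g (boundary R L (ExteriorAlgebra.ι R v * x))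
    rw [exteriorRep_ι_mul, boundary_ι_mul, boundary_ι_mul, hx, map_sub, map_smul, exteriorRep_ι_mul,
      ← LinearMap.comp_apply, augmentation_invariant]

end Representations

section Rainbow

variable {R L κ : Type*} [CommRing R]

/-- The chains spanned by the simplices with `n` vertices of pairwise distinct colours. -/
noncomputable def rainbow (R : Type*) [CommRing R] {L κ : Type*} (col : L → κ) (n : ℕ) :
    Submodule R (ExteriorAlgebra R (L →₀ R)) :=
  Submodule.span R {x | ∃ l : List L, l.length = n ∧ (l.map col).Nodup ∧ wedge R l = x}

variable {col : L → κ} {n : ℕ} {x : ExteriorAlgebra R (L →₀ R)}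

lemma wedge_mem_rainbow {l : List L} (h : (l.map col).Nodup) :
    wedge R l ∈ rainbow R col l.length :=
  Submodule.subset_span ⟨l, rfl, h, rfl⟩

lemma wedge_mem_rainbow_of_injOn {l : List L} (h : Set.InjOn col {v | v ∈ l}) :
    wedge R l ∈ rainbow R col l.length := by
  by_cases hl : l.Nodup
  · exact wedge_mem_rainbow (hl.map_on fun _ ha _ hb hab ↦ h ha hb hab)
  · rw [wedge_eq_zero_of_not_nodup hl]
    exact Submodule.zero_mem _

lemma rainbow_eq_bot [Fintype κ] (h : Fintype.card κ < n) : rainbow R col n = ⊥ := by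
  rw [rainbow, Submodule.span_eq_bot]
  rintro x ⟨l, rfl, hl, -⟩
  have := hl.length_le_card
  rw [List.length_map] at this
  exact absurd h this.not_gt

lemma map_mem_of_mem_rainbow {N : Type*} [AddCommGroup N] [Module R N]
    {f : ExteriorAlgebra R (L →₀ R) →ₗ[R] N} {W : Submodule R N}
    (h : ∀ l : List L, l.length = n → (l.map col).Nodup → f (wedge R l) ∈ W)
    (hx : x ∈ rainbow R col n) : f x ∈ W := by
  suffices rainbow R col n ≤ W.comap f from this hx
  refine Submodule.span_le.2 ?_
  rintro _ ⟨l, hl, hcol, rfl⟩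
  exact h l hl hcol

lemma map_eq_of_mem_rainbow {N : Type*} [AddCommGroup N] [Module R N]
    {f g : ExteriorAlgebra R (L →₀ R) →ₗ[R] N}
    (h : ∀ l : List L, l.length = n → (l.map col).Nodup → f (wedge R l) = g (wedge R l))
    (hx : x ∈ rainbow R col n) : f x = g x := by
  refine LinearMap.eqOn_span ?_ hx
  rintro _ ⟨l, hl, hcol, rfl⟩
  exact h l hl hcol

lemma wedge_mul_boundary_wedge_mem_rainbow (l₁ l₂ : List L) (h : ((l₁ ++ l₂).map col).Nodup) :
    wedge R l₁ * boundary R L (wedge R l₂) ∈ rainbow R col (l₁.length + l₂.length - 1) := by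
  induction l₂ generalizing l₁ with
  | nil => simp [boundary_one]
  | cons v l₂ ih =>
    rw [wedge_cons, boundary_ι_mul, Finsupp.linearCombination_single, smul_eq_mul, one_mul,
      one_smul, mul_sub]
    apply Submodule.sub_mem
    · have hsub : (l₁ ++ l₂).Sublist (l₁ ++ v :: l₂) :=
        List.Sublist.append_left (List.sublist_cons_self v l₂) l₁
      simpa [wedge_append] using wedge_mem_rainbow (R := R) (h.sublist (hsub.map col))
    · simpa [wedge_append, mul_assoc, add_right_comm, add_assoc] using
        ih (l₁ ++ [v]) (by simpa using h)

lemma boundary_mem_rainbow (hx : x ∈ rainbow R col (n + 1)) : boundary R L x ∈ rainbow R col n :=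
  map_mem_of_mem_rainbow (fun l hl hcol ↦ by
    simpa [hl] using wedge_mul_boundary_wedge_mem_rainbow (R := R) [] l hcol) hx

lemma exteriorRep_mem_rainbow {G : Type*} [Monoid G] [MulAction G L]
    (hcol : ∀ (g : G) v, col (g • v) = col v) (g : G) (hx : x ∈ rainbow R col n) :
    exteriorRep (permutationRep R G L) g x ∈ rainbow R col n :=
  map_mem_of_mem_rainbow (fun l hl hl' ↦ by
    rw [exteriorRep_wedge, ← hl, ← l.length_map (g • ·)]
    exact wedge_mem_rainbow (by simpa [Function.comp_def, hcol] using hl')) hx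

end Rainbow

section WeightedDifference

variable {K G ι : Type*} [Field K] [CommGroup G] [Fintype ι] (p : ℕ) [Fact p.Prime] [CharP K p]
  {e : ι → G}

/-- The element `∑ αᵢ (eᵢ - 1)` of the augmentation ideal of the group ring. -/
noncomputable def weightedDifference (α : ι → K) (e : ι → G) : MonoidAlgebra K G :=
  ∑ i, α i • (MonoidAlgebra.of K G (e i) - 1)

lemma sum_smul_of_pow_char (he : ∀ i, e i ^ p = 1) (c : ι → K) :
    (∑ i, c i • MonoidAlgebra.of K G (e i)) ^ p = algebraMap K _ ((∑ i, c i) ^ p) := by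
  have : CharP (MonoidAlgebra K G) p := charP_of_injective_algebraMap
    (algebraMap K (MonoidAlgebra K G)).injective p
  rw [sum_pow_char, sum_pow_char, map_sum]
  refine Finset.sum_congr rfl fun i _ ↦ ?_
  rw [smul_pow, ← map_pow, he, map_one, Algebra.algebraMap_eq_smul_one]

lemma weightedDifference_pow_char (he : ∀ i, e i ^ p = 1) (α : ι → K) :
    weightedDifference α e ^ p = 0 := by
  have : CharP (MonoidAlgebra K G) p := charP_of_injective_algebraMap
    (algebraMap K (MonoidAlgebra K G)).injective p
  rw [weightedDifference, sum_pow_char]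
  refine Finset.sum_eq_zero fun i _ ↦ ?_
  rw [smul_pow, sub_pow_char, ← map_pow, he, map_one, one_pow, sub_self, smul_zero]

end WeightedDifference

section Label

/-- A label of colour `c` is a nonzero character `χ` of the elementary abelian group `A` together
with a phase in `ℤ/p`, which `a` shifts by `χ a`. Labels are the vertices of the target complex of
the configuration space, on which `A` thus acts without fixed points. -/
@[ext]
structure Label (p : ℕ) (A κ : Type*) [AddCommGroup A] [Module (ZMod p) A] where
  /-- The colour, invariant under `A`. -/
  color : κ
  /-- The character through which `A` acts on the phase. -/
  char : Dual (ZMod p) A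
  char_ne_zero : char ≠ 0
  /-- The coordinate that `A` moves. -/
  phase : ZMod p

namespace Label

variable {p : ℕ} {A κ : Type*} [AddCommGroup A] [Module (ZMod p) A]

instance : AddAction A (Label p A κ) where
  vadd a v := { v with phase := v.phase + v.char a }
  zero_vadd v := by
    change { v with phase := v.phase + v.char 0 } = v
    rw [map_zero, add_zero]
  add_vadd a b v := by
    change { v with phase := v.phase + v.char (a + b) } =
      { v with phase := v.phase + v.char b + v.char a }
    rw [map_add, add_right_comm, add_assoc]

variable (g : Multiplicative A) (v : Label p A κ)

@[simp] lemma color_smul : (g • v).color = v.color := rfl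

@[simp] lemma char_smul : (g • v).char = v.char := rfl

@[simp] lemma phase_smul : (g • v).phase = v.phase + v.char g.toAdd := rfl

variable {K : Type*} [Field K] [Algebra (ZMod p) K] (ω : κ → K)

/-- The phase of a label, scaled by the weight `ω` of its colour. -/
def weightedPhase (v : Label p A κ) : K := v.phase • ω v.color

/-- The total shift of the weighted phases of the labels in `l` under the elements of `A`. -/
def shift (l : List (Label p A κ)) (a : A) : K := (l.map fun v ↦ v.char a • ω v.color).sum

lemma sum_weightedPhase_smul (l : List (Label p A κ)) :
    ((l.map (g • ·)).map (weightedPhase ω)).sum =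
      (l.map (weightedPhase ω)).sum + shift ω l g.toAdd := by
  unfold weightedPhase shift
  simp [add_smul, List.sum_map_add, Function.comp_def]

@[simp]
lemma shift_smul (l : List (Label p A κ)) (a : A) : shift ω (l.map (g • ·)) a = shift ω l a := by
  simp [shift, Function.comp_def]

lemma sum_mul_shift_ne_zero {ι : Type*} [Fintype ι] {α : ι → K} {ω : κ → K}
    (hind : LinearIndependent (ZMod p) fun x : ι × κ ↦ α x.1 * ω x.2) (b : Basis ι (ZMod p) A)
    {l : List (Label p A κ)} (hl : l ≠ []) (hcol : (l.map color).Nodup) :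
    ∑ i, α i * shift ω l (b i) ≠ 0 := by
  have color_inj : Function.Injective fun j : Fin l.length ↦ l[j].color := by
    intro j j' h
    simpa [Fin.ext_iff] using (hcol.getElem_inj_iff (i := j) (j := j') (hi := by simp)
      (hj := by simp)).1 (by simpa using h)
  have hind' := hind.comp (fun x : ι × Fin l.length ↦ (x.1, l[x.2].color))
    (Function.injective_id.prodMap color_inj)
  have expand : ∑ i, α i * shift ω l (b i) =
      ∑ x : ι × Fin l.length, l[x.2].char (b x.1) • (α x.1 * ω l[x.2].color) := by
    simp [shift, ← Fin.sum_univ_fun_getElem, Fintype.sum_prod_type, Finset.mul_sum]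
  intro h
  have char_basis := Fintype.linearIndependent_iff.1 hind'
    (fun x ↦ l[x.2].char (b x.1)) (expand ▸ h)
  have hpos : 0 < l.length := List.length_pos_iff.2 hl
  exact l[0].char_ne_zero (b.ext fun i ↦ char_basis (i, ⟨0, hpos⟩))

end Label

end Label

section LabelAction

variable {p : ℕ} {A κ K : Type*} [AddCommGroup A] [Module (ZMod p) A] [Field K]

/-- The action of the group ring of `A` on the chains of labels. -/
noncomputable abbrev labelAction (K : Type*) [Field K] (p : ℕ) (A κ : Type*) [AddCommGroup A]
    [Module (ZMod p) A] : MonoidAlgebra K (Multiplicative A) →ₐ[K]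
      End K (ExteriorAlgebra K (Label p A κ →₀ K)) :=
  (exteriorRep (permutationRep K (Multiplicative A) (Label p A κ))).asAlgebraHom

lemma labelAction_mem_rainbow {n : ℕ} (a : MonoidAlgebra K (Multiplicative A))
    {x : ExteriorAlgebra K (Label p A κ →₀ K)} (hx : x ∈ rainbow K Label.color n) :
    labelAction K p A κ a x ∈ rainbow K Label.color n :=
  asAlgebraHom_mem (fun g _ ↦ exteriorRep_mem_rainbow (fun _ _ ↦ rfl) g) a hx

lemma boundary_labelAction (a : MonoidAlgebra K (Multiplicative A))
    (x : ExteriorAlgebra K (Label p A κ →₀ K)) :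
    boundary K _ (labelAction K p A κ a x) = labelAction K p A κ a (boundary K _ x) :=
  map_asAlgebraHom (fun g ↦ boundary_exteriorRep g x) a

variable {ι : Type*} [Fintype ι]

/-- The element `∑ αᵢ (bᵢ - 1)` of the group ring of `A`, the `bᵢ` being a basis of `A`. -/
noncomputable abbrev basisDifference (b : Basis ι (ZMod p) A) (α : ι → K) :
    MonoidAlgebra K (Multiplicative A) :=
  weightedDifference α fun i ↦ Multiplicative.ofAdd (b i)

lemma labelAction_basisDifference_of_mem_rainbow_zero (b : Basis ι (ZMod p) A) (α : ι → K)
    {x : ExteriorAlgebra K (Label p A κ →₀ K)} (hx : x ∈ rainbow K Label.color 0) :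
    labelAction K p A κ (basisDifference b α) x = 0 := by
  refine map_eq_of_mem_rainbow (g := 0) (fun l hl _ ↦ ?_) hx
  obtain rfl := List.length_eq_zero_iff.1 hl
  simp [weightedDifference, exteriorRep_one]

end LabelAction

section Exactness

variable {p : ℕ} {A κ ι K : Type*} [AddCommGroup A] [Module (ZMod p) A] [Fintype ι] [Field K]
  [Algebra (ZMod p) K]

lemma basisDifference_pow_char [Fact p.Prime] (b : Basis ι (ZMod p) A) (α : ι → K) :
    basisDifference b α ^ p = 0 := by
  have : CharP K p := charP_of_injective_algebraMap (algebraMap (ZMod p) K).injective p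
  exact weightedDifference_pow_char p
    (fun i ↦ congrArg Multiplicative.ofAdd (ZModModule.char_nsmul_eq_zero p (b i))) α

variable (p A) in
/-- The derivation that multiplies each label by its weighted phase. Its commutator with the action
of `∑ αᵢ (bᵢ - 1)` is invertible on simplices, which makes that nilpotent operator as exact as a
free module would. -/
noncomputable def phaseDerivation (ω : κ → K) :
    End K (ExteriorAlgebra K (Label p A κ →₀ K)) :=
  exteriorDerivation (Finsupp.linearCombination K fun v ↦ Finsupp.single v (v.weightedPhase ω))

lemma phaseDerivation_wedge (ω : κ → K) (l : List (Label p A κ)) :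
    phaseDerivation p A ω (wedge K l) = (l.map (Label.weightedPhase ω)).sum • wedge K l :=
  exteriorDerivation_diagonal_wedge _ l

variable (b : Basis ι (ZMod p) A) (α : ι → K) (ω : κ → K)

/-- The group ring element through which the commutator of `phaseDerivation` and `basisDifference`
acts on the orbit of the simplex `l`. -/
noncomputable def shiftElement (l : List (Label p A κ)) : MonoidAlgebra K (Multiplicative A) :=
  ∑ i, (α i * Label.shift ω l (b i)) • MonoidAlgebra.of K _ (Multiplicative.ofAdd (b i))

lemma shiftElement_smul (g : Multiplicative A) (l : List (Label p A κ)) :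
    shiftElement b α ω (l.map (g • ·)) = shiftElement b α ω l := by
  simp only [shiftElement, Label.shift_smul]

local notation "T" => labelAction K p A κ

local notation "Γ" => ⁅phaseDerivation p A ω, T (basisDifference b α)⁆

lemma lie_phaseDerivation_wedge (l : List (Label p A κ)) :
    Γ (wedge K l) = T (shiftElement b α ω l) (wedge K l) := by
  simp only [Ring.lie_def, LinearMap.sub_apply, End.mul_apply, phaseDerivation_wedge, map_smul,
    map_sum, map_sub, map_one, Representation.asAlgebraHom_of, LinearMap.sum_apply, End.one_apply,
    LinearMap.smul_apply, exteriorRep_wedge, Label.sum_weightedPhase_smul, Finset.smul_sum,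
    shiftElement, weightedDifference, ← Finset.sum_sub_distrib, toAdd_ofAdd]
  exact Finset.sum_congr rfl fun i _ ↦ by module

lemma lie_phaseDerivation_labelAction_wedge (l : List (Label p A κ))
    (a : MonoidAlgebra K (Multiplicative A)) :
    Γ (T a (wedge K l)) = T (shiftElement b α ω l * a) (wedge K l) := by
  induction a using MonoidAlgebra.induction_on with
  | of g =>
    rw [Representation.asAlgebraHom_of, exteriorRep_wedge, lie_phaseDerivation_wedge,
      shiftElement_smul, map_mul, End.mul_apply, Representation.asAlgebraHom_of, exteriorRep_wedge]
  | add a a' h h' => simp only [mul_add, map_add, LinearMap.add_apply, h, h']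
  | smul c a h => rw [mul_smul_comm, map_smul, LinearMap.smul_apply, map_smul, h, map_smul]; rfl

lemma lie_phaseDerivation_pow_wedge (l : List (Label p A κ)) (j : ℕ) :
    (Γ ^ j) (wedge K l) = T (shiftElement b α ω l ^ j) (wedge K l) := by
  induction j with
  | zero => simp
  | succ j ih =>
    rw [pow_succ', End.mul_apply, ih, lie_phaseDerivation_labelAction_wedge, ← pow_succ']

lemma lie_phaseDerivation_comm {n : ℕ} {x : ExteriorAlgebra K (Label p A κ →₀ K)}
    (hx : x ∈ rainbow K Label.color n) :
    Γ (T (basisDifference b α) x) = T (basisDifference b α) (Γ x) := by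
  refine map_eq_of_mem_rainbow (f := Γ * T (basisDifference b α))
    (g := T (basisDifference b α) * Γ) (fun l _ _ ↦ ?_) hx
  rw [End.mul_apply, End.mul_apply, lie_phaseDerivation_labelAction_wedge,
    lie_phaseDerivation_wedge, mul_comm, map_mul, End.mul_apply]

variable [Fact p.Prime] {b α ω}

lemma shiftElement_pow [Fintype K] {l : List (Label p A κ)}
    (h : ∑ i, α i * Label.shift ω l (b i) ≠ 0) :
    shiftElement b α ω l ^ (p * (Fintype.card K - 1)) = 1 := by
  have : CharP K p := charP_of_injective_algebraMap (algebraMap (ZMod p) K).injective p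
  have hb (i : ι) : Multiplicative.ofAdd (b i) ^ p = 1 :=
    congrArg Multiplicative.ofAdd (ZModModule.char_nsmul_eq_zero p (b i))
  rw [shiftElement, pow_mul, sum_smul_of_pow_char p hb, ← map_pow,
    FiniteField.pow_card_sub_one_eq_one _ (pow_ne_zero _ h), map_one]

lemma lie_phaseDerivation_pow [Fintype K]
    (hind : LinearIndependent (ZMod p) fun x : ι × κ ↦ α x.1 * ω x.2) {n : ℕ}
    {x : ExteriorAlgebra K (Label p A κ →₀ K)} (hx : x ∈ rainbow K Label.color (n + 1)) :
    (Γ ^ (p * (Fintype.card K - 1))) x = x := by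
  refine map_eq_of_mem_rainbow (g := LinearMap.id) (fun l hl hcol ↦ ?_) hx
  have hne : l ≠ [] := List.ne_nil_of_length_eq_add_one hl
  rw [lie_phaseDerivation_pow_wedge,
    shiftElement_pow (Label.sum_mul_shift_ne_zero hind b hne hcol), map_one]
  rfl

lemma exists_labelAction_pow_eq [Finite K]
    (hind : LinearIndependent (ZMod p) fun x : ι × κ ↦ α x.1 * ω x.2) {n m e : ℕ} (h : m + e ≤ p)
    {y : ExteriorAlgebra K (Label p A κ →₀ K)} (hy : y ∈ rainbow K Label.color (n + 1))
    (h0 : T (basisDifference b α ^ e) y = 0) :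
    ∃ z ∈ rainbow K Label.color (n + 1), T (basisDifference b α ^ m) z = y := by
  have := Fintype.ofFinite K
  have : CharP K p := charP_of_injective_algebraMap (algebraMap (ZMod p) K).injective p
  have hq : p * (Fintype.card K - 1) ≠ 0 :=
    mul_ne_zero (Fact.out : p.Prime).ne_zero (Nat.sub_ne_zero_of_lt Fintype.one_lt_card)
  simp only [map_pow] at h0 ⊢
  refine exists_mem_pow_apply_eq (D := phaseDerivation p A ω) p (fun x ↦ labelAction_mem_rainbow _)
    (fun x ↦ ?_) (fun x ↦ lie_phaseDerivation_comm b α ω) hq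
    (fun x ↦ lie_phaseDerivation_pow hind) h hy h0
  refine map_mem_of_mem_rainbow fun l hl hcol ↦ ?_
  rw [phaseDerivation_wedge, ← hl]
  exact Submodule.smul_mem _ _ (wedge_mem_rainbow hcol)

end Exactness

section NoChain

/-- Consecutive exponents add up to `p`, so that the operators `t ^ dualExponent p i` alternate
between `t` and `t ^ (p - 1)`. -/
def dualExponent (p i : ℕ) : ℕ := if Even i then p - 1 else 1

lemma dualExponent_add_succ {p : ℕ} (hp : p ≠ 0) (i : ℕ) :
    dualExponent p i + dualExponent p (i + 1) = p := by
  by_cases h : Even i <;> simp [dualExponent, h, Nat.even_add_one] <;> omega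

variable {p : ℕ} [Fact p.Prime] {A κ ι K : Type*} [AddCommGroup A] [Module (ZMod p) A] [Fintype ι]
  [Field K] [Algebra (ZMod p) K] {b : Basis ι (ZMod p) A} {α : ι → K} {ω : κ → K}
  [Finite K] [Fintype κ]

lemma exists_eq_boundary_add_labelAction
    (hind : LinearIndependent (ZMod p) fun x : ι × κ ↦ α x.1 * ω x.2)
    {y : ℕ → ExteriorAlgebra K (Label p A κ →₀ K)}
    (hy : ∀ i ≤ Fintype.card κ, y i ∈ rainbow K Label.color (i + 1))
    (hboundary : ∀ i < Fintype.card κ, boundary K _ (y (i + 1)) =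
      labelAction K p A κ (basisDifference b α ^ dualExponent p (i + 1)) (y i))
    {i : ℕ} (hi : i ≤ Fintype.card κ) :
    ∃ z ∈ rainbow K Label.color (i + 1), ∃ w, y i =
      boundary K _ w + labelAction K p A κ (basisDifference b α ^ dualExponent p i) z := by
  induction hi using Nat.decreasingInduction with
  | self =>
    refine ⟨0, Submodule.zero_mem _, 0, ?_⟩
    have := hy _ le_rfl
    rw [rainbow_eq_bot (Nat.lt_succ_self _), Submodule.mem_bot] at this
    simpa using this
  | of_succ i hi ih =>
    obtain ⟨z, hz, w, hzw⟩ := ih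
    have hcycle : labelAction K p A κ (basisDifference b α ^ dualExponent p (i + 1))
        (y i - boundary K _ z) = 0 := by
      rw [map_sub, ← hboundary i hi, hzw, map_add, boundary_boundary, zero_add,
        boundary_labelAction, sub_self]
    obtain ⟨z', hz', h⟩ := exists_labelAction_pow_eq hind
      (dualExponent_add_succ (Fact.out : p.Prime).ne_zero i).le
      (Submodule.sub_mem _ (hy i hi.le) (boundary_mem_rainbow hz)) hcycle
    exact ⟨z', hz', z, by rw [h, add_sub_cancel]⟩

/-- The algebraic obstruction: a chain map from a resolution of the group to the chains of labels
would have to be nonzero in degrees where no colourful simplices are left. -/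
theorem not_exists_chain_of_linearIndependent
    (hind : LinearIndependent (ZMod p) fun x : ι × κ ↦ α x.1 * ω x.2)
    {y : ℕ → ExteriorAlgebra K (Label p A κ →₀ K)}
    (hy : ∀ i ≤ Fintype.card κ, y i ∈ rainbow K Label.color (i + 1))
    (hone : boundary K _ (y 0) = 1) :
    ¬ ∀ i < Fintype.card κ, boundary K _ (y (i + 1)) =
      labelAction K p A κ (basisDifference b α ^ dualExponent p (i + 1)) (y i) := by
  intro hboundary
  obtain ⟨z, hz, w, h⟩ := exists_eq_boundary_add_labelAction hind hy hboundary (Nat.zero_le _)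
  have hexp : dualExponent p 0 ≠ 0 :=
    Nat.sub_ne_zero_of_lt (Fact.out : p.Prime).one_lt
  have h0 : labelAction K p A κ (basisDifference b α ^ dualExponent p 0) (boundary K _ z) = 0 := by
    rw [← Nat.sub_one_add_one hexp, pow_succ, map_mul, End.mul_apply,
      labelAction_basisDifference_of_mem_rainbow_zero b α (boundary_mem_rainbow hz), map_zero]
  rw [h, map_add, boundary_boundary, zero_add, boundary_labelAction, h0] at hone
  exact zero_ne_one hone

end NoChain

section FieldExistence

lemma exists_linearIndependent_mul (p : ℕ) [Fact p.Prime] (ι κ : Type*) [Finite ι] [Finite κ]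
    [Nonempty ι] [Nonempty κ] :
    ∃ (K : Type) (_ : Field K) (_ : Finite K) (_ : Algebra (ZMod p) K) (α : ι → K) (ω : κ → K),
      LinearIndependent (ZMod p) fun x : ι × κ ↦ α x.1 * ω x.2 := by
  have : NeZero (Nat.card κ) := ⟨Nat.card_pos.ne'⟩
  let F := GaloisField p (Nat.card ι)
  let K := FiniteField.Extension F p (Nat.card κ)
  let b : Basis ι (ZMod p) F := (finBasisOfFinrankEq (ZMod p) F
    (GaloisField.finrank p Nat.card_pos.ne')).reindex (Finite.equivFin ι).symm
  let c : Basis κ F K := (finBasisOfFinrankEq F K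
    (FiniteField.finrank_extension F p (Nat.card κ))).reindex (Finite.equivFin κ).symm
  refine ⟨K, inferInstance, inferInstance, inferInstance, fun i ↦ algebraMap F K (b i), c, ?_⟩
  have hbc : ⇑(b.smulTower c) = fun x ↦ algebraMap F K (b x.1) * c x.2 :=
    funext fun x ↦ (b.smulTower_apply c x).trans (Algebra.smul_def _ _)
  exact hbc ▸ (b.smulTower c).linearIndependent

end FieldExistence

/-! ### Subdivided chains and equivariant labellings -/

lemma map_mem_of_mem_supported {R A M : Type*} [CommRing R] [AddCommGroup M] [Module R M]
    {f : (A →₀ R) →ₗ[R] M} {S : Set A} {U : Submodule R M}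
    (h : ∀ a ∈ S, f (Finsupp.single a 1) ∈ U) {x : A →₀ R} (hx : x ∈ Finsupp.supported R R S) :
    f x ∈ U := by
  rw [Finsupp.supported_eq_span_single] at hx
  exact Submodule.span_le.2 (Set.image_subset_iff.2 h : _ ⊆ (U.comap f : Set (A →₀ R))) hx

section OrderedChain

variable {R E F : Type*} [CommRing R]

/-- Ordered simplicial chains: formal combinations of lists of vertices. The empty list is a
simplex of dimension `-1`, so that the complex is augmented. -/
abbrev OrderedChain (R E : Type*) [CommRing R] : Type _ := List E →₀ R

/-- The cone operator, which prepends the vertex `a` to every simplex. -/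
noncomputable def cone (R : Type*) [CommRing R] (a : E) : End R (OrderedChain R E) :=
  Finsupp.lmapDomain R R (List.cons a)

/-- The chain map induced by a map of vertices. -/
noncomputable def mapChain (R : Type*) [CommRing R] (T : E → F) :
    OrderedChain R E →ₗ[R] OrderedChain R F :=
  Finsupp.lmapDomain R R (List.map T)

/-- The boundary operator `∂[a₀, …, aₙ] = ∑ (-1)ⁱ [a₀, …, âᵢ, …, aₙ]`. -/
noncomputable def chainBoundary (R E : Type*) [CommRing R] : End R (OrderedChain R E) :=
  Finsupp.linearCombination R fun l ↦
    ∑ i ∈ Finset.range l.length, (-1 : R) ^ i • Finsupp.single (l.eraseIdx i) 1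

@[simp]
lemma cone_single (a : E) (l : List E) (c : R) :
    cone R a (Finsupp.single l c) = Finsupp.single (a :: l) c :=
  Finsupp.mapDomain_single

@[simp]
lemma mapChain_single (T : E → F) (l : List E) (c : R) :
    mapChain R T (Finsupp.single l c) = Finsupp.single (l.map T) c :=
  Finsupp.mapDomain_single

lemma mapChain_cone (T : E → F) (a : E) (x : OrderedChain R E) :
    mapChain R T (cone R a x) = cone R (T a) (mapChain R T x) := by
  suffices mapChain R T ∘ₗ cone R a = cone R (T a) ∘ₗ mapChain R T from LinearMap.congr_fun this x
  ext l : 2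
  simp

lemma chainBoundary_single (l : List E) :
    chainBoundary R E (Finsupp.single l 1) =
      ∑ i ∈ Finset.range l.length, (-1 : R) ^ i • Finsupp.single (l.eraseIdx i) 1 := by
  simp [chainBoundary]

lemma chainBoundary_cone (a : E) (x : OrderedChain R E) :
    chainBoundary R E (cone R a x) = x - cone R a (chainBoundary R E x) := by
  suffices chainBoundary R E ∘ₗ cone R a = LinearMap.id - cone R a ∘ₗ chainBoundary R E from
    LinearMap.congr_fun this x
  ext l : 2
  simp [chainBoundary_single, Finset.sum_range_succ', pow_succ, neg_add_eq_sub,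
    -Finsupp.smul_single]

lemma chainBoundary_nil : chainBoundary R E (Finsupp.single [] 1) = 0 := by
  simp [chainBoundary_single]

lemma chainBoundary_cons (a : E) (l : List E) :
    chainBoundary R E (Finsupp.single (a :: l) 1) =
      Finsupp.single l 1 - cone R a (chainBoundary R E (Finsupp.single l 1)) := by
  rw [← cone_single, chainBoundary_cone]

lemma chainBoundary_chainBoundary (x : OrderedChain R E) :
    chainBoundary R E (chainBoundary R E x) = 0 := by
  suffices chainBoundary R E ∘ₗ chainBoundary R E = 0 from LinearMap.congr_fun this x
  ext l : 2
  change chainBoundary R E (chainBoundary R E (Finsupp.single l 1)) = 0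
  induction l with
  | nil => rw [chainBoundary_nil, map_zero]
  | cons a l ih => rw [chainBoundary_cons, map_sub, chainBoundary_cone, ih, map_zero, sub_zero,
      sub_self]

lemma mapChain_chainBoundary (T : E → F) (x : OrderedChain R E) :
    mapChain R T (chainBoundary R E x) = chainBoundary R F (mapChain R T x) := by
  suffices mapChain R T ∘ₗ chainBoundary R E = chainBoundary R F ∘ₗ mapChain R T from
    LinearMap.congr_fun this x
  ext l : 2
  simp [chainBoundary_single, List.eraseIdx_map, -Finsupp.smul_single]

lemma cone_mem_supported {a : E} {S S' : Set (List E)} (h : ∀ l ∈ S, a :: l ∈ S')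
    {x : OrderedChain R E} (hx : x ∈ Finsupp.supported R R S) :
    cone R a x ∈ Finsupp.supported R R S' :=
  map_mem_of_mem_supported (fun l hl ↦ by
    rw [cone_single]; exact Finsupp.single_mem_supported R _ (h l hl)) hx

end OrderedChain

section Barycenter

/-- The barycentre of a nonempty list of points. -/
noncomputable def barycenter {E : Type*} [AddCommGroup E] [Module ℝ E] (l : List E) : E :=
  (l.length : ℝ)⁻¹ • l.sum

section Module

variable {E : Type*} [AddCommGroup E] [Module ℝ E]

lemma barycenter_map {F : Type*} [AddCommGroup F] [Module ℝ F] (T : E →ₗ[ℝ] F) (l : List E) :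
    barycenter (l.map T) = T (barycenter l) := by
  simp [barycenter, map_list_sum]

lemma barycenter_mem {l : List E} (hl : l ≠ []) {s : Set E} (hs : Convex ℝ s)
    (h : ∀ a ∈ l, a ∈ s) : barycenter l ∈ s := by
  have hlength : (l.length : ℝ) ≠ 0 := by simpa using hl
  have barycenter_eq : barycenter l = ∑ i : Fin l.length, (l.length : ℝ)⁻¹ • l.get i := by
    rw [barycenter, ← Finset.smul_sum]
    simp
  rw [barycenter_eq]
  exact hs.sum_mem (fun _ _ ↦ by positivity) (by simp [hlength]) fun i _ ↦ h _ (l.get_mem i)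

lemma barycenter_perm {l l' : List E} (h : l.Perm l') : barycenter l = barycenter l' := by
  rw [barycenter, barycenter, h.length_eq, h.sum_eq]

lemma sub_barycenter_cons (a : E) (l : List E) :
    a - barycenter (a :: l) = (l.length / (l.length + 1) : ℝ) • (a - barycenter l) := by
  rcases eq_or_ne l [] with rfl | hl
  · simp [barycenter]
  have hlength : (l.length : ℝ) ≠ 0 := by simpa using hl
  rw [barycenter, barycenter, List.length_cons, List.sum_cons]
  push_cast
  match_scalars <;> field_simp
  ring

end Module

lemma dist_barycenter_le {E : Type*} [SeminormedAddCommGroup E] [NormedSpace ℝ E] {N : ℕ}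
    {l : List E} (hl : l.length ≤ N + 1) {δ : ℝ} (h : ∀ a ∈ l, ∀ b ∈ l, dist a b ≤ δ) {a : E}
    (ha : a ∈ l) : dist a (barycenter l) ≤ N / (N + 1) * δ := by
  obtain ⟨s, t, rfl⟩ := List.append_of_mem ha
  have hδ : 0 ≤ δ := dist_nonneg.trans (h a ha a ha)
  have hperm : (s ++ a :: t).Perm (a :: (s ++ t)) := List.perm_middle
  have hlength : ((s ++ t).length : ℝ) ≤ N := by
    exact_mod_cast Nat.le_of_succ_le_succ (hperm.length_eq ▸ hl)
  rw [barycenter_perm hperm, dist_eq_norm, sub_barycenter_cons, norm_smul, Real.norm_of_nonneg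
    (by positivity)]
  rcases eq_or_ne (s ++ t) [] with hst | hst
  · rw [hst, List.length_nil, Nat.cast_zero, zero_div, zero_mul]
    positivity
  have hball : barycenter (s ++ t) ∈ Metric.closedBall a δ :=
    barycenter_mem hst (convex_closedBall a δ) fun b hb ↦ by
      rw [Metric.mem_closedBall']
      exact h a ha b (hperm.mem_iff.2 (List.mem_cons_of_mem a hb))
  rw [Metric.mem_closedBall', dist_eq_norm] at hball
  refine mul_le_mul ?_ hball (norm_nonneg _) (by positivity)
  rw [div_le_div_iff₀ (by positivity) (by positivity)]
  linarith

end Barycenter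

section Subdivision

variable {R E : Type*} [CommRing R] [AddCommGroup E] [Module ℝ E]

/-- The barycentric subdivision of a simplex: the cone from its barycentre over the subdivision of
its boundary. -/
noncomputable def subdivideSimplex (R : Type*) [CommRing R] {E : Type*} [AddCommGroup E]
    [Module ℝ E] : List E → OrderedChain R E
  | [] => Finsupp.single [] 1
  | a :: l => cone R (barycenter (a :: l)) (∑ i : Fin (l.length + 1),
      (-1 : R) ^ (i : ℕ) • subdivideSimplex R ((a :: l).eraseIdx i))
termination_by l => l.length
decreasing_by simp [List.length_eraseIdx, Nat.le_of_lt_succ i.isLt]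

/-- Barycentric subdivision of chains. -/
noncomputable def subdivision (R E : Type*) [CommRing R] [AddCommGroup E] [Module ℝ E] :
    End R (OrderedChain R E) :=
  Finsupp.linearCombination R (subdivideSimplex R)

lemma subdivision_nil :
    subdivision R E (Finsupp.single [] 1) = Finsupp.single [] 1 := by
  simp [subdivision, subdivideSimplex]

lemma subdivision_single {l : List E} (hl : l ≠ []) :
    subdivision R E (Finsupp.single l 1) =
      cone R (barycenter l) (subdivision R E (chainBoundary R E (Finsupp.single l 1))) := by
  obtain ⟨a, l, rfl⟩ := List.exists_cons_of_ne_nil hl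
  rw [chainBoundary_single, Finset.sum_range]
  simp [subdivision, subdivideSimplex, -Finsupp.smul_single]

@[elab_as_elim]
lemma face_induction {E : Type*} {motive : List E → Prop} (nil : motive [])
    (cone : ∀ l ≠ [], (∀ i < l.length, motive (l.eraseIdx i)) → motive l) : ∀ l, motive l
  | [] => nil
  | a :: l => cone _ (List.cons_ne_nil a l) fun i _ ↦ face_induction nil cone _
termination_by l => l.length
decreasing_by simp_all [List.length_eraseIdx]

lemma commute_chainBoundary_subdivision :
    Commute (chainBoundary R E) (subdivision R E) := by
  refine Finsupp.lhom_ext' fun l ↦ LinearMap.ext_ring ?_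
  change chainBoundary R E (subdivision R E (Finsupp.single l 1)) =
    subdivision R E (chainBoundary R E (Finsupp.single l 1))
  induction l using face_induction with
  | nil => rw [subdivision_nil, chainBoundary_nil, map_zero]
  | cone l hl ih =>
    have hboundary : chainBoundary R E (subdivision R E (chainBoundary R E (Finsupp.single l 1))) =
        subdivision R E (chainBoundary R E (chainBoundary R E (Finsupp.single l 1))) := by
      rw [chainBoundary_single]
      simp only [map_sum, map_smul]
      exact Finset.sum_congr rfl fun i hi ↦ by rw [ih i (Finset.mem_range.1 hi)]
    rw [subdivision_single hl, chainBoundary_cone, hboundary, chainBoundary_chainBoundary,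
      map_zero, map_zero, sub_zero]

lemma mapChain_subdivision {F : Type*} [AddCommGroup F] [Module ℝ F] (T : E →ₗ[ℝ] F)
    (x : OrderedChain R E) :
    mapChain R T (subdivision R E x) = subdivision R F (mapChain R T x) := by
  suffices mapChain R T ∘ₗ subdivision R E = subdivision R F ∘ₗ mapChain R T from
    LinearMap.congr_fun this x
  refine Finsupp.lhom_ext' fun l ↦ LinearMap.ext_ring ?_
  change mapChain R T (subdivision R E (Finsupp.single l 1)) =
    subdivision R F (mapChain R T (Finsupp.single l 1))
  induction l using face_induction with
  | nil => simp [subdivision_nil]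
  | cone l hl ih =>
    rw [mapChain_single, subdivision_single hl, mapChain_cone, ← barycenter_map,
      subdivision_single (by simpa using hl), ← mapChain_single, ← mapChain_chainBoundary,
      chainBoundary_single]
    simp only [map_sum, map_smul]
    exact Finset.sum_congr rfl fun i hi ↦ by rw [ih i (Finset.mem_range.1 hi)]

lemma subdivision_pow_nil (m : ℕ) :
    (subdivision R E ^ m) (Finsupp.single [] 1) = Finsupp.single [] 1 := by
  induction m with
  | zero => rfl
  | succ m ih => rw [pow_succ, End.mul_apply, subdivision_nil, ih]

end Subdivision

section SmallSimplices

/-- The simplices with `n` vertices, all of them in one member of the family `𝒮`. -/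
def simplicesIn {E : Type*} (𝒮 : Set (Set E)) (n : ℕ) : Set (List E) :=
  {l | l.length = n ∧ ∃ s ∈ 𝒮, ∀ a ∈ l, a ∈ s}

/-- The simplices in `simplicesIn 𝒮 n` of diameter at most `δ`. -/
def smallSimplicesIn {E : Type*} [PseudoMetricSpace E] (𝒮 : Set (Set E)) (n : ℕ) (δ : ℝ) :
    Set (List E) :=
  {l ∈ simplicesIn 𝒮 n | ∀ a ∈ l, ∀ b ∈ l, dist a b ≤ δ}

variable {R E : Type*} [CommRing R] [SeminormedAddCommGroup E] [NormedSpace ℝ E]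

lemma cons_barycenter_mem_smallSimplicesIn {s : Set E} (hs : Convex ℝ s) {l m : List E}
    (hne : l ≠ []) (hl : ∀ a ∈ l, a ∈ s) {n : ℕ} {δ : ℝ} (hδ : 0 ≤ δ)
    (hm : m ∈ smallSimplicesIn {s ∩ Metric.closedBall (barycenter l) δ} n δ) :
    barycenter l :: m ∈ smallSimplicesIn {s} (n + 1) δ := by
  obtain ⟨⟨hlength, _, rfl, hms⟩, hdist⟩ := hm
  refine ⟨⟨congrArg (· + 1) hlength, s, rfl, ?_⟩, ?_⟩
  · rintro a (_ | ⟨_, ha⟩)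
    · exact barycenter_mem hne hs hl
    · exact (hms a ha).1
  · rintro a (_ | ⟨_, ha⟩) b (_ | ⟨_, hb⟩)
    · rwa [dist_self]
    · exact Metric.mem_closedBall'.1 (hms b hb).2
    · exact (hms a ha).2
    · exact hdist a ha b hb

lemma subdivision_single_mem_supported {N n : ℕ} {δ : ℝ} {s : Set E} (hs : Convex ℝ s)
    {l : List E} (hl : l ∈ smallSimplicesIn {s} n δ) (hn : n ≤ N + 1) :
    subdivision R E (Finsupp.single l 1) ∈
      Finsupp.supported R R (smallSimplicesIn {s} n (N / (N + 1) * δ)) := by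
  induction l using face_induction generalizing s n with
  | nil =>
    rw [subdivision_nil]
    exact Finsupp.single_mem_supported R _ ⟨hl.1, by simp⟩
  | cone l hne ih =>
    obtain ⟨⟨rfl, _, rfl, hls⟩, hdist⟩ := hl
    obtain ⟨n, hlength⟩ := Nat.exists_eq_succ_of_ne_zero (List.length_pos_iff.2 hne).ne'
    have hδ : 0 ≤ δ := by
      obtain ⟨a, ha⟩ := List.exists_mem_of_ne_nil l hne
      exact dist_nonneg.trans (hdist a ha a ha)
    rw [subdivision_single hne, hlength]
    refine cone_mem_supported
      (fun m ↦ cons_barycenter_mem_smallSimplicesIn hs hne hls (by positivity)) ?_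
    rw [chainBoundary_single, map_sum]
    refine Submodule.sum_mem _ fun i hi ↦ ?_
    rw [map_smul]
    have hi' := Finset.mem_range.1 hi
    have hface : ∀ a ∈ l.eraseIdx i, a ∈ l := fun a ha ↦ List.mem_of_mem_eraseIdx ha
    refine Submodule.smul_mem _ _
      (ih i hi' (hs.inter (convex_closedBall _ _)) ⟨⟨?_, _, rfl, ?_⟩, ?_⟩ (by omega))
    · rw [List.length_eraseIdx_of_lt hi', hlength, Nat.succ_sub_one]
    · exact fun a ha ↦ ⟨hls a (hface a ha), dist_barycenter_le hn hdist (hface a ha)⟩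
    · exact fun a ha b hb ↦ hdist a (hface a ha) b (hface b hb)

lemma subdivision_pow_mem_supported {𝒮 : Set (Set E)} (h𝒮 : ∀ s ∈ 𝒮, Convex ℝ s) {N n : ℕ}
    (hn : n ≤ N + 1) {δ : ℝ} {x : OrderedChain R E}
    (hx : x ∈ Finsupp.supported R R (smallSimplicesIn 𝒮 n δ)) (m : ℕ) :
    (subdivision R E ^ m) x ∈
      Finsupp.supported R R (smallSimplicesIn 𝒮 n ((N / (N + 1)) ^ m * δ)) := by
  induction m with
  | zero => simpa using hx
  | succ m ih =>
    rw [pow_succ' (subdivision R E), End.mul_apply, pow_succ', mul_assoc]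
    refine map_mem_of_mem_supported ?_ ih
    rintro l ⟨⟨hlength, s, hs, hls⟩, hdist⟩
    refine Finsupp.supported_mono ?_ (subdivision_single_mem_supported (h𝒮 s hs)
      ⟨⟨hlength, s, rfl, hls⟩, hdist⟩ hn)
    rintro l' ⟨⟨hlength', _, rfl, hls'⟩, hdist'⟩
    exact ⟨⟨hlength', _, hs, hls'⟩, hdist'⟩

lemma exists_pow_mul_lt (N : ℕ) (δ : ℝ) {ε : ℝ} (hε : 0 < ε) :
    ∃ m : ℕ, (N / (N + 1) : ℝ) ^ m * δ < ε := by
  have hlt : (N / (N + 1) : ℝ) < 1 := by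
    rw [div_lt_one (by positivity)]
    exact lt_add_one _
  have htendsto := (tendsto_pow_atTop_nhds_zero_of_lt_one (by positivity) hlt).mul_const δ
  rw [zero_mul] at htendsto
  exact (htendsto.eventually (gt_mem_nhds hε)).exists

end SmallSimplices

section ChainRepresentation

variable {R E G : Type*} [CommRing R] [AddCommGroup E] [Module ℝ E] [Monoid G]

lemma chainBoundary_subdivision_pow (m : ℕ) (x : OrderedChain R E) :
    chainBoundary R E ((subdivision R E ^ m) x) = (subdivision R E ^ m) (chainBoundary R E x) := by
  have hcomm := (commute_chainBoundary_subdivision (R := R) (E := E)).pow_right m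
  rw [← End.mul_apply, hcomm.eq, End.mul_apply]

/-- The action on chains induced by a linear action on the vertices. -/
noncomputable def chainRep (R : Type*) [CommRing R] (ρ : Representation ℝ G E) :
    Representation R G (OrderedChain R E) where
  toFun g := mapChain R (ρ g)
  map_one' := by ext l : 2; simp [End.coe_one]
  map_mul' g h := by ext l : 2; simp [End.coe_mul]

variable (ρ : Representation ℝ G E)

lemma chainRep_apply (g : G) : chainRep R ρ g = mapChain R (ρ g) := rfl

lemma chainBoundary_asAlgebraHom (a : MonoidAlgebra R G) (x : OrderedChain R E) :
    chainBoundary R E ((chainRep R ρ).asAlgebraHom a x) =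
      (chainRep R ρ).asAlgebraHom a (chainBoundary R E x) :=
  map_asAlgebraHom (fun g ↦ (mapChain_chainBoundary (ρ g) x).symm) a

lemma subdivision_pow_asAlgebraHom (m : ℕ) (a : MonoidAlgebra R G) (x : OrderedChain R E) :
    (subdivision R E ^ m) ((chainRep R ρ).asAlgebraHom a x) =
      (chainRep R ρ).asAlgebraHom a ((subdivision R E ^ m) x) := by
  refine map_asAlgebraHom (fun g ↦ ?_) a
  have hcomm : Commute (subdivision R E) (chainRep R ρ g) :=
    LinearMap.ext fun y ↦ (mapChain_subdivision (ρ g) y).symm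
  rw [← End.mul_apply, (hcomm.pow_left m).eq, End.mul_apply]

variable {ρ}

lemma asAlgebraHom_mem_supported {S : Set (List E)} (hS : ∀ g, ∀ l ∈ S, l.map (ρ g) ∈ S)
    (a : MonoidAlgebra R G) {x : OrderedChain R E} (hx : x ∈ Finsupp.supported R R S) :
    (chainRep R ρ).asAlgebraHom a x ∈ Finsupp.supported R R S := by
  refine asAlgebraHom_mem (fun g y hy ↦ map_mem_of_mem_supported (fun l hl ↦ ?_) hy) a hx
  rw [chainRep_apply, mapChain_single]
  exact Finsupp.single_mem_supported R _ (hS g l hl)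

end ChainRepresentation

section LabelChain

variable {R E L : Type*} [CommRing R]

/-- The chain map to the exterior algebra given by labelling the vertices. -/
noncomputable def labelChain (R : Type*) [CommRing R] {E L : Type*} (lab : E → L) :
    OrderedChain R E →ₗ[R] ExteriorAlgebra R (L →₀ R) :=
  Finsupp.linearCombination R fun l ↦ wedge R (l.map lab)

@[simp]
lemma labelChain_single (lab : E → L) (l : List E) :
    labelChain R lab (Finsupp.single l 1) = wedge R (l.map lab) := by
  simp [labelChain]

lemma labelChain_cone (lab : E → L) (a : E) (x : OrderedChain R E) :
    labelChain R lab (cone R a x) =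
      ExteriorAlgebra.ι R (Finsupp.single (lab a) 1) * labelChain R lab x := by
  suffices labelChain R lab ∘ₗ cone R a =
      LinearMap.mulLeft R (ExteriorAlgebra.ι R (Finsupp.single (lab a) 1)) ∘ₗ labelChain R lab from
    LinearMap.congr_fun this x
  ext l : 2
  simp

lemma boundary_labelChain (lab : E → L) (x : OrderedChain R E) :
    boundary R L (labelChain R lab x) = labelChain R lab (chainBoundary R E x) := by
  suffices boundary R L ∘ₗ labelChain R lab = labelChain R lab ∘ₗ chainBoundary R E from
    LinearMap.congr_fun this x
  ext l : 2
  change boundary R L (labelChain R lab (Finsupp.single l 1)) =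
    labelChain R lab (chainBoundary R E (Finsupp.single l 1))
  induction l with
  | nil => simp [boundary_one, chainBoundary_nil]
  | cons a l ih =>
    rw [chainBoundary_cons, map_sub, labelChain_cone, ← ih, labelChain_single, labelChain_single,
      List.map_cons, wedge_cons, boundary_ι_mul, Finsupp.linearCombination_single, one_smul,
      one_smul]

lemma labelChain_asAlgebraHom {G : Type*} [AddCommGroup E] [Module ℝ E] [Monoid G]
    [MulAction G L] {ρ : Representation ℝ G E} {lab : E → L} {X : Set E}
    (hX : ∀ g, ∀ a ∈ X, lab (ρ g a) = g • lab a) (a : MonoidAlgebra R G) {x : OrderedChain R E}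
    (hx : x ∈ Finsupp.supported R R {l | ∀ a ∈ l, a ∈ X}) :
    labelChain R lab ((chainRep R ρ).asAlgebraHom a x) =
      (exteriorRep (permutationRep R G L)).asAlgebraHom a (labelChain R lab x) := by
  refine map_asAlgebraHom (fun g ↦ ?_) a
  rw [Finsupp.supported_eq_span_single] at hx
  refine LinearMap.eqOn_span (f := labelChain R lab ∘ₗ chainRep R ρ g)
    (g := exteriorRep (permutationRep R G L) g ∘ₗ labelChain R lab) ?_ hx
  rintro _ ⟨l, hl, rfl⟩
  simp only [LinearMap.comp_apply, chainRep_apply, mapChain_single, labelChain_single,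
    exteriorRep_wedge, List.map_map]
  exact congrArg _ (List.map_congr_left fun a ha ↦ hX g a (hl a ha))

lemma labelChain_mem_rainbow {κ : Type*} {lab : E → L} {col : L → κ} {n : ℕ} {S : Set (List E)}
    (hS : ∀ l ∈ S, l.length = n ∧
      ∀ a ∈ l, ∀ b ∈ l, col (lab a) = col (lab b) → lab a = lab b)
    {x : OrderedChain R E} (hx : x ∈ Finsupp.supported R R S) :
    labelChain R lab x ∈ rainbow R col n := by
  refine map_mem_of_mem_supported (fun l hl ↦ ?_) hx
  obtain ⟨hlength, hinj⟩ := hS l hl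
  rw [labelChain_single, ← hlength, ← List.length_map (f := lab)]
  refine wedge_mem_rainbow_of_injOn ?_
  simp only [Set.InjOn, Set.mem_ofPred_eq, List.mem_map]
  rintro _ ⟨a, ha, rfl⟩ _ ⟨b, hb, rfl⟩
  exact hinj a ha b hb

end LabelChain

section ResolutionChain

variable {R E G : Type*} [CommRing R] [AddCommGroup E] [Module ℝ E] [CommGroup G] (p : ℕ)
  (ρ : Representation ℝ G E) (v : ℕ → E) (t : MonoidAlgebra R G)

/-- The image of the generator of degree `i` of the periodic resolution with differentials
`t, t ^ (p - 1), t, …`, obtained by coning successively with the vertices `v i`. -/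
noncomputable def resolutionChain : ℕ → OrderedChain R E
  | 0 => Finsupp.single [v 0] 1
  | i + 1 => cone R (v (i + 1))
      ((chainRep R ρ).asAlgebraHom (t ^ dualExponent p (i + 1)) (resolutionChain i))

lemma chainBoundary_resolutionChain_zero :
    chainBoundary R E (resolutionChain p ρ v t 0) = Finsupp.single [] 1 := by
  rw [resolutionChain, chainBoundary_cons, chainBoundary_nil, map_zero, sub_zero]

variable {p ρ t}

lemma chainBoundary_resolutionChain_succ (hp : p ≠ 0) (ht : t ^ p = 0)
    (hnil : (chainRep R ρ).asAlgebraHom t (Finsupp.single [] 1) = 0) (i : ℕ) :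
    chainBoundary R E (resolutionChain p ρ v t (i + 1)) =
      (chainRep R ρ).asAlgebraHom (t ^ dualExponent p (i + 1)) (resolutionChain p ρ v t i) := by
  suffices hcycle : (chainRep R ρ).asAlgebraHom (t ^ dualExponent p (i + 1))
      (chainBoundary R E (resolutionChain p ρ v t i)) = 0 by
    rw [resolutionChain, chainBoundary_cone, chainBoundary_asAlgebraHom, hcycle, map_zero, sub_zero]
  induction i with
  | zero =>
    have hone : dualExponent p (0 + 1) = 1 := if_neg (by decide)
    rw [chainBoundary_resolutionChain_zero, hone, pow_one, hnil]
  | succ i ih =>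
    rw [resolutionChain, chainBoundary_cone, chainBoundary_asAlgebraHom, ih, map_zero, sub_zero,
      ← End.mul_apply, ← map_mul, ← pow_add, add_comm, dualExponent_add_succ hp, ht, map_zero,
      LinearMap.zero_apply]

variable {v}

lemma resolutionChain_mem_supported {𝒮 : ℕ → Set (Set E)} {N : ℕ}
    (hzero : ∃ s ∈ 𝒮 0, v 0 ∈ s)
    (htranslate : ∀ i, ∀ s ∈ 𝒮 i, ∀ g, ∃ s' ∈ 𝒮 i, Set.MapsTo (ρ g) s s')
    (hcone : ∀ i < N, ∀ s ∈ 𝒮 i, ∃ s' ∈ 𝒮 (i + 1), insert (v (i + 1)) s ⊆ s') {i : ℕ}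
    (hi : i ≤ N) :
    resolutionChain p ρ v t i ∈ Finsupp.supported R R (simplicesIn (𝒮 i) (i + 1)) := by
  induction i with
  | zero =>
    obtain ⟨s, hs, hv⟩ := hzero
    exact Finsupp.single_mem_supported R _ ⟨rfl, s, hs, by simpa using hv⟩
  | succ i ih =>
    refine cone_mem_supported ?_ (asAlgebraHom_mem_supported ?_ _ (ih (Nat.le_of_succ_le hi)))
    · rintro l ⟨hlength, s, hs, hls⟩
      obtain ⟨s', hs', hsub⟩ := hcone i hi s hs
      refine ⟨congrArg (· + 1) hlength, s', hs', List.forall_mem_cons.2 ⟨?_, fun a ha ↦ ?_⟩⟩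
      · exact hsub (Set.mem_insert _ _)
      · exact hsub (Set.mem_insert_of_mem _ (hls a ha))
    · rintro g l ⟨hlength, s, hs, hls⟩
      obtain ⟨s', hs', hmaps⟩ := htranslate i s hs g
      exact ⟨by simpa using hlength, s', hs', List.forall_mem_map.2 fun a ha ↦ hmaps (hls a ha)⟩

end ResolutionChain

lemma asAlgebraHom_basisDifference_nil {p : ℕ} {A ι K E : Type*} [AddCommGroup A]
    [Module (ZMod p) A] [Fintype ι] [Field K] [AddCommGroup E] [Module ℝ E]
    (ρ : Representation ℝ (Multiplicative A) E) (b : Basis ι (ZMod p) A) (α : ι → K) :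
    (chainRep K ρ).asAlgebraHom (basisDifference b α) (Finsupp.single [] 1) = 0 := by
  simp [basisDifference, weightedDifference, chainRep_apply]

section Labelling

variable {p : ℕ} [Fact p.Prime] {A ι κ K E : Type*} [AddCommGroup A] [Module (ZMod p) A]
  [Field K] [Algebra (ZMod p) K] [SeminormedAddCommGroup E] [NormedSpace ℝ E]

lemma exists_subdivided_chain [Fintype ι] (b : Basis ι (ZMod p) A) (α : ι → K)
    (ρ : Representation ℝ (Multiplicative A) E) {𝒮 : ℕ → Set (Set E)} (N : ℕ) {v : ℕ → E}
    {δ ε : ℝ} (hε : 0 < ε) (hconvex : ∀ i, ∀ s ∈ 𝒮 i, Convex ℝ s)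
    (hdist : ∀ i, ∀ s ∈ 𝒮 i, ∀ a ∈ s, ∀ b ∈ s, dist a b ≤ δ) (hzero : ∃ s ∈ 𝒮 0, v 0 ∈ s)
    (htranslate : ∀ i, ∀ s ∈ 𝒮 i, ∀ g, ∃ s' ∈ 𝒮 i, Set.MapsTo (ρ g) s s')
    (hcone : ∀ i < N, ∀ s ∈ 𝒮 i, ∃ s' ∈ 𝒮 (i + 1), insert (v (i + 1)) s ⊆ s') :
    ∃ x : ℕ → OrderedChain K E, chainBoundary K E (x 0) = Finsupp.single [] 1 ∧
      (∀ i, chainBoundary K E (x (i + 1)) =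
        (chainRep K ρ).asAlgebraHom (basisDifference b α ^ dualExponent p (i + 1)) (x i)) ∧
      ∃ δ' < ε, ∀ i ≤ N, x i ∈ Finsupp.supported K K (smallSimplicesIn (𝒮 i) (i + 1) δ') := by
  obtain ⟨m, hm⟩ := exists_pow_mul_lt N δ hε
  refine ⟨fun i ↦ (subdivision K E ^ m) (resolutionChain p ρ v (basisDifference b α) i),
    ?_, fun i ↦ ?_, _, hm, fun i hi ↦ ?_⟩
  · rw [chainBoundary_subdivision_pow, chainBoundary_resolutionChain_zero, subdivision_pow_nil]
  · rw [chainBoundary_subdivision_pow, chainBoundary_resolutionChain_succ v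
      (Fact.out : p.Prime).ne_zero (basisDifference_pow_char b α)
      (asAlgebraHom_basisDifference_nil ρ b α), subdivision_pow_asAlgebraHom]
  · refine subdivision_pow_mem_supported (hconvex i) (Nat.succ_le_succ hi)
      (Finsupp.supported_mono ?_ (resolutionChain_mem_supported hzero htranslate hcone hi)) m
    rintro l ⟨hlength, s, hs, hls⟩
    exact ⟨⟨hlength, s, hs, hls⟩,
      fun a ha b hb ↦ hdist i s hs a (hls a ha) b (hls b hb)⟩

/-- In small simplices vertices of the same colour have the same label, so an equivariant labelling
would map the subdivided resolution to rainbow chains. -/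
lemma exists_color_eq_and_ne_of_equivariant [Finite ι] [Fintype κ] [Finite K] {α : ι → K}
    {ω : κ → K} (hind : LinearIndependent (ZMod p) fun x : ι × κ ↦ α x.1 * ω x.2)
    (b : Basis ι (ZMod p) A) {ρ : Representation ℝ (Multiplicative A) E}
    {𝒮 : ℕ → Set (Set E)} {v : ℕ → E} {δ ε : ℝ} (hε : 0 < ε)
    (hconvex : ∀ i, ∀ s ∈ 𝒮 i, Convex ℝ s)
    (hdist : ∀ i, ∀ s ∈ 𝒮 i, ∀ a ∈ s, ∀ b ∈ s, dist a b ≤ δ) (hzero : ∃ s ∈ 𝒮 0, v 0 ∈ s)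
    (htranslate : ∀ i, ∀ s ∈ 𝒮 i, ∀ g, ∃ s' ∈ 𝒮 i, Set.MapsTo (ρ g) s s')
    (hcone : ∀ i < Fintype.card κ, ∀ s ∈ 𝒮 i, ∃ s' ∈ 𝒮 (i + 1), insert (v (i + 1)) s ⊆ s')
    {X : Set E} (hX : ∀ i, ∀ s ∈ 𝒮 i, s ⊆ X) {lab : E → Label p A κ}
    (hlab : ∀ g, ∀ a ∈ X, lab (ρ g a) = g • lab a) :
    ∃ a ∈ X, ∃ b ∈ X, dist a b < ε ∧ (lab a).color = (lab b).color ∧ lab a ≠ lab b := by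
  have := Fintype.ofFinite ι
  by_contra! hcolor
  obtain ⟨x, hone, hboundary, δ', hδ', hsupp⟩ :=
    exists_subdivided_chain b α ρ (Fintype.card κ) hε hconvex hdist hzero htranslate hcone
  refine not_exists_chain_of_linearIndependent (b := b) hind (y := fun i ↦ labelChain K lab (x i))
    (fun i hi ↦ labelChain_mem_rainbow ?_ (hsupp i hi)) ?_ fun i hi ↦ ?_
  · rintro l ⟨⟨hlength, s, hs, hls⟩, hsmall⟩
    exact ⟨hlength, fun a ha b hb ↦ hcolor a (hX i s hs (hls a ha)) b (hX i s hs (hls b hb))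
      ((hsmall a ha b hb).trans_lt hδ')⟩
  · rw [boundary_labelChain, hone, labelChain_single, List.map_nil, wedge_nil]
  · rw [boundary_labelChain, hboundary]
    refine labelChain_asAlgebraHom hlab _ (Finsupp.supported_mono ?_ (hsupp i hi.le))
    exact fun l ⟨⟨_, s, hs, hls⟩, _⟩ a ha ↦ hX i s hs (hls a ha)

end Labelling

/-! ### The topological Tverberg theorem -/

section Characters

variable {p : ℕ} [Fact p.Prime] {A : Type*} [AddCommGroup A] [Module (ZMod p) A]

lemma exists_dual_ne_zero_of_stabilizer_ne_top {Y : Type*} [AddAction A Y] {y : Y}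
    (hy : AddAction.stabilizer A y ≠ ⊤) :
    ∃ χ : Dual (ZMod p) A, χ ≠ 0 ∧ ∀ g ∈ AddAction.stabilizer A y, χ g = 0 := by
  let S := AddSubgroup.toZModSubmodule p (AddAction.stabilizer A y)
  have hS : S < ⊤ := lt_top_iff_ne_top.2 fun h ↦
    hy ((AddSubgroup.toZModSubmodule p).injective (h.trans (OrderIso.map_top _).symm))
  obtain ⟨χ, hχ, hker⟩ := Submodule.exists_le_ker_of_lt_top S hS
  exact ⟨χ, hχ, fun g hg ↦ hker hg⟩

lemma stabilizer_finset_ne_top [Fintype A] [DecidableEq A] {T : Finset A} (hT : T.Nonempty)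
    (hT' : T ≠ Finset.univ) : AddAction.stabilizer A T ≠ ⊤ := by
  intro htop
  obtain ⟨t, ht⟩ := hT
  refine hT' (Finset.eq_univ_of_forall fun a ↦ ?_)
  have hstab : (a - t) +ᵥ T = T :=
    AddAction.mem_stabilizer_iff.1 (htop ▸ AddSubgroup.mem_top (a - t))
  rw [← hstab, Finset.mem_vadd_finset]
  exact ⟨t, ht, sub_add_cancel a t⟩

/-- A character of an orbit that kills the stabilizers is an equivariant map from the orbit to the
characters with phase. -/
lemma exists_equivariant_char_phase [Nontrivial A] (Y : Type*) [AddAction A Y] :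
    ∃ (χ : Y → Dual (ZMod p) A) (φ : Y → ZMod p), (∀ y, χ y ≠ 0) ∧
      (∀ (g : A) y, χ (g +ᵥ y) = χ y) ∧
      ∀ (g : A) y, AddAction.stabilizer A y ≠ ⊤ → φ (g +ᵥ y) = φ y + χ y g := by
  have exists_char (y : Y) : ∃ χ : Dual (ZMod p) A, χ ≠ 0 ∧
      (AddAction.stabilizer A y ≠ ⊤ → ∀ g ∈ AddAction.stabilizer A y, χ g = 0) := by
    by_cases hy : AddAction.stabilizer A y = ⊤
    · obtain ⟨χ, hχ⟩ := exists_ne (0 : Dual (ZMod p) A)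
      exact ⟨χ, hχ, fun h ↦ absurd hy h⟩
    · obtain ⟨χ, hχ, hker⟩ := exists_dual_ne_zero_of_stabilizer_ne_top (p := p) hy
      exact ⟨χ, hχ, fun _ ↦ hker⟩
  choose χ hχ hker using exists_char
  let base (y : Y) : Y := (Quotient.mk (AddAction.orbitRel A Y) y).out
  have exists_vadd_base (y : Y) : ∃ g : A, g +ᵥ base y = y :=
    (AddAction.orbitRel A Y).symm (Quotient.mk_out (s := AddAction.orbitRel A Y) y)
  have base_vadd (g : A) (y : Y) : base (g +ᵥ y) = base y :=
    congrArg Quotient.out (Quotient.sound (s := AddAction.orbitRel A Y) ⟨g, rfl⟩)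
  choose shift hshift using exists_vadd_base
  refine ⟨fun y ↦ χ (base y), fun y ↦ χ (base y) (shift y), fun y ↦ hχ _,
    fun g y ↦ congrArg χ (base_vadd g y), fun g y hy ↦ ?_⟩
  have hbase : AddAction.stabilizer A (base y) ≠ ⊤ := by
    rwa [← hshift y, AddAction.stabilizer_vadd_eq_right] at hy
  have hdiff : -shift (g +ᵥ y) + (g + shift y) ∈ AddAction.stabilizer A (base y) := by
    rw [AddAction.mem_stabilizer_iff, add_vadd, add_vadd, hshift, neg_vadd_eq_iff,
      ← base_vadd g y, hshift]
  have hzero := hker _ hbase _ hdiff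
  rw [map_add, map_neg, map_add, neg_add_eq_zero] at hzero
  simp only [base_vadd, hzero, add_comm]

end Characters

section Gap

variable {A : Type*} [Fintype A]

/-- The values of `u` on the nonempty proper subset `T` exceed those on its complement by `δ`. -/
def IsGap (u : A → ℝ) (δ : ℝ) (T : Finset A) : Prop :=
  T.Nonempty ∧ T ≠ Finset.univ ∧ ∀ a ∈ T, ∀ b ∉ T, u b + δ ≤ u a

namespace IsGap

variable {u u' : A → ℝ} {δ δ' : ℝ} {T T' : Finset A}

lemma mono (h : IsGap u δ T) (hδ : δ' ≤ δ) : IsGap u δ' T :=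
  ⟨h.1, h.2.1, fun a ha b hb ↦ (add_le_add_right hδ _).trans (h.2.2 a ha b hb)⟩

lemma eq_of_card_eq (h : IsGap u δ T) (h' : IsGap u' δ T') (hcard : T.card = T'.card)
    (hu : ∀ a, dist (u a) (u' a) < δ) : T = T' := by
  by_contra hne
  have hT : ¬ T ⊆ T' := fun hsub ↦ hne (Finset.eq_of_subset_of_card_le hsub hcard.ge)
  have hT' : ¬ T' ⊆ T := fun hsub ↦ hne (Finset.eq_of_subset_of_card_le hsub hcard.le).symm
  obtain ⟨a, ha, ha'⟩ := Finset.not_subset.1 hT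
  obtain ⟨b, hb, hb'⟩ := Finset.not_subset.1 hT'
  have hgap := h.2.2 a ha b hb'
  have hgap' := h'.2.2 b hb a ha'
  have hclose := abs_lt.1 (hu a)
  have hclose' := abs_lt.1 (hu b)
  linarith [hclose.2, hclose'.1]

lemma vadd [AddCommGroup A] [DecidableEq A] (h : IsGap u δ T) (g : A) :
    IsGap (fun a ↦ u (a - g)) δ (g +ᵥ T) := by
  have mem_vadd_iff (a : A) : a ∈ g +ᵥ T ↔ a - g ∈ T := by
    rw [← Finset.neg_vadd_mem_iff, vadd_eq_add, neg_add_eq_sub]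
  refine ⟨h.1.vadd_finset, fun huniv ↦ h.2.1 ?_, fun a ha b hb ↦ ?_⟩
  · rw [← neg_vadd_vadd g T, huniv, Finset.vadd_finset_univ]
  · rw [mem_vadd_iff] at ha hb
    exact h.2.2 _ ha _ hb

end IsGap

lemma exists_finset_forall_lt {u : A → ℝ} (hu : ∃ a b, u a ≠ u b) :
    ∃ T : Finset A, T.Nonempty ∧ T ≠ Finset.univ ∧ ∀ a ∈ T, ∀ b ∉ T, u b < u a := by
  obtain ⟨a, b, hab⟩ := hu
  wlog hlt : u a < u b generalizing a b
  · exact this b a hab.symm (lt_of_le_of_ne (not_lt.1 hlt) hab.symm)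
  refine ⟨Finset.univ.filter fun c ↦ u a < u c, ⟨b, by simpa⟩, fun huniv ↦ ?_,
    fun c hc e he ↦ ?_⟩
  · have := huniv ▸ Finset.mem_univ a
    simp at this
  · simp only [Finset.mem_filter, Finset.mem_univ, true_and, not_lt] at hc he
    exact he.trans_lt hc

variable {Y ι : Type*} [TopologicalSpace Y] {F : Y → A → ι → ℝ}

lemma exists_eventually_isGap (hF : Continuous F) {z : Y} (hz : ∃ a b, F z a ≠ F z b) :
    ∃ δ > 0, ∃ i T, ∀ᶠ w in 𝓝 z, IsGap (fun a ↦ F w a i) δ T := by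
  obtain ⟨a, b, hab⟩ := hz
  obtain ⟨i, hi⟩ := Function.ne_iff.1 hab
  obtain ⟨T, hT, hT', hlt⟩ := exists_finset_forall_lt (u := fun a ↦ F z a i) ⟨a, b, hi⟩
  have hnear : ∀ᶠ q : ℝ × Y in 𝓝 (0, z), ∀ a b, a ∈ T → b ∉ T → F q.2 b i + q.1 ≤ F q.2 a i := by
    simp only [eventually_all]
    intro a b ha hb
    have hcont (a : A) : Continuous fun q : ℝ × Y ↦ F q.2 a i := by fun_prop
    refine ((((hcont b).add continuous_fst).tendsto _).eventually_lt ((hcont a).tendsto _) ?_).mono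
      fun _ ↦ le_of_lt
    simpa using hlt a ha b hb
  rw [nhds_prod_eq] at hnear
  obtain ⟨δ, hδ, hpos⟩ := ((hnear.curry.filter_mono nhdsWithin_le_nhds).and
    (self_mem_nhdsWithin (s := Set.Ioi (0 : ℝ)))).exists
  exact ⟨δ, hpos, i, T, hδ.mono fun w hw ↦ ⟨hT, hT', fun a ha b hb ↦ hw a b ha hb⟩⟩

lemma exists_uniform_isGap {X : Set Y} (hX : IsCompact X) (hF : Continuous F)
    (hne : ∀ z ∈ X, ∃ a b, F z a ≠ F z b) :
    ∃ δ > 0, ∀ z ∈ X, ∃ i T, IsGap (fun a ↦ F z a i) δ T := by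
  refine hX.induction_on (p := fun s ↦ ∃ δ > 0, ∀ z ∈ s, ∃ i T, IsGap (fun a ↦ F z a i) δ T)
    ⟨1, one_pos, by simp⟩ (fun s t hst ⟨δ, hδ, h⟩ ↦ ⟨δ, hδ, fun z hz ↦ h z (hst hz)⟩) ?_ ?_
  · rintro s t ⟨δ, hδ, hs⟩ ⟨δ', hδ', ht⟩
    refine ⟨min δ δ', lt_min hδ hδ', fun z hz ↦ ?_⟩
    rcases hz with hz | hz
    · obtain ⟨i, T, h⟩ := hs z hz
      exact ⟨i, T, h.mono (min_le_left _ _)⟩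
    · obtain ⟨i, T, h⟩ := ht z hz
      exact ⟨i, T, h.mono (min_le_right _ _)⟩
  · intro z hz
    obtain ⟨δ, hδ, i, T, h⟩ := exists_eventually_isGap hF (hne z hz)
    exact ⟨_, mem_nhdsWithin_of_mem_nhds h, δ, hδ, fun w hw ↦ ⟨i, T, hw⟩⟩

end Gap

section Labelling

variable {A ι : Type*} [Fintype A] {u u' : A → ι → ℝ} {δ : ℝ}
  {c : ι × Fin (Fintype.card A - 1)} {T T' : Finset A}

/-- A gap in the coordinate `c.1` of `u`, above exactly `c.2 + 1` values. The pair `c` determines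
the gap, and it does not change when the domain of `u` is translated. -/
def IsColoredGap (u : A → ι → ℝ) (δ : ℝ) (c : ι × Fin (Fintype.card A - 1)) (T : Finset A) :
    Prop :=
  IsGap (fun a ↦ u a c.1) δ T ∧ T.card = c.2 + 1

lemma IsGap.exists_isColoredGap {i : ι} (h : IsGap (fun a ↦ u a i) δ T) :
    ∃ c, IsColoredGap u δ c T := by
  have hpos : 0 < T.card := h.1.card_pos
  have hlt : T.card < Fintype.card A := (Finset.card_lt_iff_ne_univ T).2 h.2.1
  exact ⟨(i, ⟨T.card - 1, by lia⟩), h, by simp only; lia⟩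

namespace IsColoredGap

lemma eq_of_dist_lt [Fintype ι] (h : IsColoredGap u δ c T) (h' : IsColoredGap u' δ c T')
    (hu : dist u u' < δ) : T = T' :=
  h.1.eq_of_card_eq h'.1 (h.2.trans h'.2.symm) fun a ↦
    ((dist_le_pi_dist (u a) (u' a) c.1).trans (dist_le_pi_dist u u' a)).trans_lt hu

variable [AddCommGroup A]

lemma vadd [DecidableEq A] (h : IsColoredGap u δ c T) (g : A) :
    IsColoredGap (fun a ↦ u (a - g)) δ c (g +ᵥ T) :=
  ⟨h.1.vadd g, by rw [Finset.card_vadd_finset, h.2]⟩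

lemma exists_comp_sub_iff (g : A) :
    (∃ T, IsColoredGap (fun a ↦ u (a - g)) δ c T) ↔ ∃ T, IsColoredGap u δ c T := by
  classical
  refine ⟨fun ⟨T, hT⟩ ↦ ⟨-g +ᵥ T, ?_⟩, fun ⟨T, hT⟩ ↦ ⟨g +ᵥ T, hT.vadd g⟩⟩
  simpa using hT.vadd (-g)

end IsColoredGap

lemma exists_equivariant_label {p : ℕ} [Fact p.Prime] [AddCommGroup A] [Module (ZMod p) A]
    [Nontrivial A] [Fintype ι] [Nonempty ι] (hδ : 0 < δ) :
    ∃ lab : (A → ι → ℝ) → Label p A (ι × Fin (Fintype.card A - 1)),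
      (∀ g : Multiplicative A, ∀ u, (∃ c T, IsColoredGap u δ c T) →
        lab (fun a ↦ u (a - g.toAdd)) = g • lab u) ∧
      ∀ u u', (∃ c T, IsColoredGap u δ c T) → (∃ c T, IsColoredGap u' δ c T) →
        dist u u' < δ → (lab u).color = (lab u').color → lab u = lab u' := by
  classical
  have : NeZero (Fintype.card A - 1) := ⟨by have := Fintype.one_lt_card (α := A); lia⟩
  obtain ⟨χ, φ, hχ, hχ_vadd, hφ_vadd⟩ := exists_equivariant_char_phase (p := p) (A := A) (Finset A)
  let col (u : A → ι → ℝ) : ι × Fin (Fintype.card A - 1) :=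
    Classical.epsilon fun c ↦ ∃ T, IsColoredGap u δ c T
  have exists_gap (u : A → ι → ℝ) (hu : ∃ c T, IsColoredGap u δ c T) :
      ∃ T, IsColoredGap u δ (col u) T := Classical.epsilon_spec hu
  choose! T hT using exists_gap
  have col_sub (g : A) (u : A → ι → ℝ) : col (fun a ↦ u (a - g)) = col u := by
    simp only [col, IsColoredGap.exists_comp_sub_iff]
  have T_sub (g : A) (u) (hu : ∃ c T, IsColoredGap u δ c T) :
      T (fun a ↦ u (a - g)) = g +ᵥ T u := by
    have hg := hT (fun a ↦ u (a - g)) (by simpa only [IsColoredGap.exists_comp_sub_iff] using hu)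
    rw [col_sub] at hg
    exact hg.eq_of_dist_lt ((hT u hu).vadd g) (by rwa [dist_self])
  refine ⟨fun u ↦ ⟨col u, χ (T u), hχ _, φ (T u)⟩, fun g u hu ↦ ?_,
    fun u u' hu hu' hdist hcol ↦ ?_⟩
  · have hstab := stabilizer_finset_ne_top (hT u hu).1.1 (hT u hu).1.2.1
    ext1
    · exact col_sub _ u
    · simp only [Label.char_smul, T_sub _ u hu, hχ_vadd]
    · simp only [Label.phase_smul, T_sub _ u hu, hφ_vadd _ _ hstab]
  · have hcol : col u = col u' := hcol
    have hgap := hT u hu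
    rw [hcol] at hgap
    simp only [hcol, hgap.eq_of_dist_lt (hT u' hu') hdist]

end Labelling

section DeletedJoin

variable {I A : Type*}

/-- The deleted join of copies, indexed by `A`, of the simplex with vertex set `I`: its points are
convex combinations of points of pairwise disjoint faces, the one in the copy `a` having weights
`fun k ↦ z (k, a)`. -/
def deletedJoin (I A : Type*) [Fintype I] [Fintype A] : Set (I × A → ℝ) :=
  {z | z ∈ stdSimplex ℝ (I × A) ∧ ∀ k a b, a ≠ b → z (k, a) = 0 ∨ z (k, b) = 0}

lemma isCompact_deletedJoin [Fintype I] [Fintype A] : IsCompact (deletedJoin I A) := by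
  have heq : deletedJoin I A = stdSimplex ℝ (I × A) ∩ ⋂ (k : I) (a : A) (b : A) (_ : a ≠ b),
      ({z | z (k, a) = 0} ∪ {z | z (k, b) = 0}) := by
    ext
    simp [deletedJoin]
  rw [heq]
  refine (isCompact_stdSimplex ℝ (I × A)).inter_right ?_
  exact isClosed_iInter fun k ↦ isClosed_iInter fun a ↦ isClosed_iInter fun b ↦
    isClosed_iInter fun _ ↦ (isClosed_eq (continuous_apply _) continuous_const).union
      (isClosed_eq (continuous_apply _) continuous_const)

/-- The action of `A` permuting the copies in the deleted join. -/
def translation (I A : Type*) [AddCommGroup A] :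
    Representation ℝ (Multiplicative A) (I × A → ℝ) where
  toFun g := LinearMap.funLeft ℝ ℝ fun x ↦ (x.1, x.2 - g.toAdd)
  map_one' := by ext; simp
  map_mul' g h := by
    refine LinearMap.ext fun z ↦ funext fun x ↦ congrArg z ?_
    simp only [toAdd_mul, sub_sub]

lemma translation_mem_stdSimplex [Fintype I] [Fintype A] [AddCommGroup A] (g : Multiplicative A)
    {z : I × A → ℝ} (hz : z ∈ stdSimplex ℝ (I × A)) : translation I A g z ∈ stdSimplex ℝ (I × A) :=
  ⟨fun _ ↦ hz.1 _,
    (((Equiv.refl I).prodCongr (Equiv.subRight g.toAdd)).sum_comp z).trans hz.2⟩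

variable [Fintype A] {N : ℕ}

/-- The cell of the deleted join spanned by the vertices `(k, h k)` with `k ≤ i`. -/
def joinCell (i : ℕ) (h : Fin (N + 1) → A) : Set (Fin (N + 1) × A → ℝ) :=
  {z | z ∈ stdSimplex ℝ (Fin (N + 1) × A) ∧ ∀ x, z x ≠ 0 → x.2 = h x.1 ∧ (x.1 : ℕ) ≤ i}

lemma joinCell_subset_deletedJoin (i : ℕ) (h : Fin (N + 1) → A) :
    joinCell i h ⊆ deletedJoin (Fin (N + 1)) A := by
  refine fun z hz ↦ ⟨hz.1, fun k a b hab ↦ ?_⟩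
  by_contra! hne
  exact hab ((hz.2 _ hne.1).1.trans (hz.2 _ hne.2).1.symm)

lemma convex_joinCell (i : ℕ) (h : Fin (N + 1) → A) : Convex ℝ (joinCell i h) := by
  refine (convex_stdSimplex ℝ _).inter fun z hz w hw s t _ _ _ x hx ↦ ?_
  by_cases hzx : z x = 0
  · exact hw x fun hwx ↦ hx (by simp [hzx, hwx])
  · exact hz x hzx

variable [AddCommGroup A]

lemma translation_mem_joinCell (g : Multiplicative A) {i : ℕ} {h : Fin (N + 1) → A}
    {z : Fin (N + 1) × A → ℝ} (hz : z ∈ joinCell i h) :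
    translation _ A g z ∈ joinCell i fun k ↦ h k + g.toAdd :=
  ⟨translation_mem_stdSimplex g hz.1,
    fun _ hx ↦ ⟨eq_add_of_sub_eq (hz.2 _ hx).1, (hz.2 _ hx).2⟩⟩

lemma single_mem_joinCell [DecidableEq A] {i : ℕ} {h : Fin (N + 1) → A}
    (hh : h (Fin.ofNat (N + 1) i) = 0) :
    Pi.single (Fin.ofNat (N + 1) i, 0) 1 ∈ joinCell i h := by
  refine ⟨single_mem_stdSimplex ℝ _, fun x hx ↦ ?_⟩
  have hx : x = (Fin.ofNat (N + 1) i, 0) := by_contra fun hne ↦ hx (Pi.single_eq_of_ne hne 1)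
  exact ⟨hx ▸ hh.symm, hx ▸ Nat.mod_le _ _⟩

lemma joinCell_subset_joinCell_update {i : ℕ} (hi : i < N) (h : Fin (N + 1) → A) :
    joinCell i h ⊆ joinCell (i + 1) (Function.update h (Fin.ofNat (N + 1) (i + 1)) 0) := by
  refine fun z hz ↦ ⟨hz.1, fun x hx ↦ ?_⟩
  obtain ⟨heq, hle⟩ := hz.2 x hx
  have hne : x.1 ≠ Fin.ofNat (N + 1) (i + 1) := by
    rintro hx
    rw [hx, Fin.val_ofNat, Nat.mod_eq_of_lt (by lia)] at hle
    lia
  exact ⟨by rw [Function.update_of_ne hne, heq], by lia⟩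

end DeletedJoin

lemma exists_color_eq_and_ne_of_deletedJoin {p : ℕ} [Fact p.Prime] {A : Type*}
    [AddCommGroup A] [Module (ZMod p) A] [Fintype A] [Nontrivial A] {κ : Type*} [Fintype κ]
    [Nonempty κ] {N : ℕ} (hκ : Fintype.card κ ≤ N) {ε : ℝ} (hε : 0 < ε)
    {lab : (Fin (N + 1) × A → ℝ) → Label p A κ}
    (hlab : ∀ g, ∀ z ∈ deletedJoin (Fin (N + 1)) A,
      lab (translation (Fin (N + 1)) A g z) = g • lab z) :
    ∃ z ∈ deletedJoin (Fin (N + 1)) A, ∃ w ∈ deletedJoin (Fin (N + 1)) A,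
      dist z w < ε ∧ (lab z).color = (lab w).color ∧ lab z ≠ lab w := by
  classical
  have : Nonempty (Fin (finrank (ZMod p) A)) := ⟨⟨0, finrank_pos⟩⟩
  obtain ⟨K, _, _, _, α, ω, hind⟩ :=
    exists_linearIndependent_mul p (Fin (finrank (ZMod p) A)) κ
  obtain ⟨C, hC⟩ := Metric.isBounded_iff.1 (bounded_stdSimplex (Fin (N + 1) × A))
  refine exists_color_eq_and_ne_of_equivariant hind (finBasis (ZMod p) A) (δ := C)
    (𝒮 := fun i ↦ Set.range (joinCell i)) (v := fun i ↦ Pi.single (Fin.ofNat (N + 1) i, 0) 1)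
    hε ?_ ?_ ⟨_, ⟨0, rfl⟩, single_mem_joinCell rfl⟩ ?_ ?_ ?_ hlab
  · rintro i _ ⟨h, rfl⟩
    exact convex_joinCell i h
  · rintro i _ ⟨h, rfl⟩ z hz w hw
    exact hC hz.1 hw.1
  · rintro i _ ⟨h, rfl⟩ g
    exact ⟨_, ⟨_, rfl⟩, fun z hz ↦ translation_mem_joinCell g hz⟩
  · rintro i hi _ ⟨h, rfl⟩
    exact ⟨_, ⟨_, rfl⟩, Set.insert_subset (single_mem_joinCell (Function.update_self ..))
      (joinCell_subset_joinCell_update (hi.trans_le hκ) h)⟩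
  · rintro i _ ⟨h, rfl⟩
    exact joinCell_subset_deletedJoin i h

lemma exists_mem_deletedJoin_forall_eq (p : ℕ) [Fact p.Prime] {A : Type*} [AddCommGroup A]
    [Module (ZMod p) A] [Fintype A] [Nontrivial A] {ι : Type*} [Fintype ι] [Nonempty ι] {N : ℕ}
    (hN : Fintype.card ι * (Fintype.card A - 1) ≤ N) {Φ : (Fin (N + 1) → ℝ) → ι → ℝ}
    (hΦ : Continuous Φ) :
    ∃ z ∈ deletedJoin (Fin (N + 1)) A, ∀ a b, Φ (fun k ↦ z (k, a)) = Φ fun k ↦ z (k, b) := by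
  classical
  by_contra! hne
  have : NeZero (Fintype.card A - 1) := ⟨by have := Fintype.one_lt_card (α := A); lia⟩
  let F (z : Fin (N + 1) × A → ℝ) (a : A) : ι → ℝ := Φ fun k ↦ z (k, a)
  have hF : Continuous F := continuous_pi fun a ↦ hΦ.comp (by fun_prop)
  obtain ⟨δ, hδ, hgap⟩ := exists_uniform_isGap isCompact_deletedJoin hF hne
  have hgap (z) (hz : z ∈ deletedJoin (Fin (N + 1)) A) : ∃ c T, IsColoredGap (F z) δ c T :=
    have ⟨_, _, h⟩ := hgap z hz
    have ⟨c, h⟩ := h.exists_isColoredGap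
    ⟨c, _, h⟩
  obtain ⟨ε, hε, hunif⟩ := Metric.uniformContinuousOn_iff.1
    (isCompact_deletedJoin.uniformContinuousOn_of_continuous hF.continuousOn) δ hδ
  obtain ⟨lab, hlab, hclose⟩ := exists_equivariant_label (p := p) (A := A) (ι := ι) hδ
  obtain ⟨z, hz, w, hw, hdist, hcolor, hlab_ne⟩ := exists_color_eq_and_ne_of_deletedJoin
    (lab := fun z ↦ lab (F z)) (by simpa using hN) hε fun g z hz ↦ hlab g (F z) (hgap z hz)
  exact hlab_ne (hclose _ _ (hgap z hz) (hgap w hw) (hunif z hz w hw hdist) hcolor)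

theorem topological_tverberg {r N : ℕ} (hr : IsPrimePow r) {F : Type*} [NormedAddCommGroup F]
    [NormedSpace ℝ F] [FiniteDimensional ℝ F] (hN : (finrank ℝ F + 1) * (r - 1) ≤ N)
    {f : (Fin (N + 1) → ℝ) → F} (hf : Continuous f) :
    ∃ x : Fin r → Fin (N + 1) → ℝ, (∀ i, x i ∈ stdSimplex ℝ (Fin (N + 1))) ∧
      (∀ i j, i ≠ j → ∀ k, x i k = 0 ∨ x j k = 0) ∧ ∀ i j, f (x i) = f (x j) := by
  obtain ⟨p, n, hp, hn, rfl⟩ := (isPrimePow_nat_iff r).1 hr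
  have : Fact p.Prime := ⟨hp⟩
  have : Nonempty (Fin n) := ⟨⟨0, hn⟩⟩
  have hcard : Fintype.card (Fin n → ZMod p) = p ^ n := by simp [ZMod.card]
  let e := (finBasis ℝ F).equivFunL
  let Φ (u : Fin (N + 1) → ℝ) : Option (Fin (finrank ℝ F)) → ℝ
    | none => ∑ k, u k
    | some i => e (f (((p ^ n : ℕ) : ℝ) • u)) i
  have hΦ : Continuous Φ := continuous_pi fun
    | none => by fun_prop
    | some i => by fun_prop
  obtain ⟨z, ⟨hz, hdisjoint⟩, heq⟩ := exists_mem_deletedJoin_forall_eq p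
    (A := Fin n → ZMod p) (by rwa [hcard, Fintype.card_option, Fintype.card_fin]) hΦ
  have hsum (a) : ((p ^ n : ℕ) : ℝ) * ∑ k, z (k, a) = 1 := by
    have hconst (b) : ∑ k, z (k, b) = ∑ k, z (k, a) := congrFun (heq b a) none
    rw [← hz.2, Fintype.sum_prod_type_right, Finset.sum_congr rfl fun b _ ↦ hconst b]
    simp [ZMod.card]
  let copy : Fin (p ^ n) ≃ (Fin n → ZMod p) := (Fintype.equivFinOfCardEq hcard).symm
  refine ⟨fun i ↦ ((p ^ n : ℕ) : ℝ) • fun k ↦ z (k, copy i), fun i ↦ ⟨fun k ↦ ?_, ?_⟩,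
    fun i j hij k ↦ ?_, fun i j ↦ e.injective (funext fun k ↦ ?_)⟩
  · exact mul_nonneg (Nat.cast_nonneg _) (hz.1 _)
  · simpa only [Pi.smul_apply, smul_eq_mul, ← Finset.mul_sum] using hsum _
  · exact (hdisjoint k _ _ (copy.injective.ne hij)).imp (fun h ↦ by simp [h]) fun h ↦ by simp [h]
  · exact congrFun (heq (copy i) (copy j)) (some k)

/-! ### Maps from the simplex boundary to the boundary of a polytope -/

section MinkowskiWeyl

variable {R W : Type*} [Field R] [LinearOrder R] [IsStrictOrderedRing R]

lemma exists_nonneg_forall_mul_le_iff {ι : Type*} (s : Finset ι) (a b : ι → R) :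
    (∃ t, 0 ≤ t ∧ ∀ i ∈ s, t * a i ≤ b i) ↔
      (∀ i ∈ s, 0 ≤ a i → 0 ≤ b i) ∧
        ∀ i ∈ s, ∀ j ∈ s, 0 < a i → a j < 0 → 0 ≤ a i * b j - a j * b i := by
  classical
  constructor
  · rintro ⟨t, ht, h⟩
    refine ⟨fun i hi hai ↦ (mul_nonneg ht hai).trans (h i hi), fun i hi j hj hai haj ↦ ?_⟩
    linarith [mul_le_mul_of_nonneg_left (h j hj) hai.le,
      mul_le_mul_of_nonpos_left (h i hi) haj.le]
  · rintro ⟨hnonneg, hpair⟩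
    obtain ⟨t, ht_mem, ht⟩ := Finset.exists_max_image
      (insert 0 ((s.filter (a · < 0)).image fun j ↦ b j / a j)) id (by simp)
    refine ⟨t, ht 0 (by simp), fun i hi ↦ ?_⟩
    rcases lt_trichotomy (a i) 0 with hai | hai | hai
    · have hle : b i / a i ≤ t := ht _ <| Finset.mem_insert_of_mem <| Finset.mem_image_of_mem _ <|
        Finset.mem_filter.2 ⟨hi, hai⟩
      exact (div_le_iff_of_neg hai).1 hle
    · simpa [hai] using hnonneg i hi hai.ge
    · rcases Finset.mem_insert.1 ht_mem with rfl | ht_mem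
      · simpa using hnonneg i hi hai.le
      · obtain ⟨j, hj, rfl⟩ := Finset.mem_image.1 ht_mem
        obtain ⟨hj, haj⟩ := Finset.mem_filter.1 hj
        have hij := hpair i hi j hj hai haj
        rw [div_mul_eq_mul_div, div_le_iff_of_neg haj]
        linarith

variable [AddCommGroup W] [Module R W]

lemma dualFG_bot [FiniteDimensional R W] :
    (⊥ : PointedCone R W).DualFG (.id : Dual R W →ₗ[R] _) := by
  let b := finBasis R W
  have hdual : PointedCone.dual (.id : Dual R W →ₗ[R] _)
      (Set.range b.coord ∪ Set.range (-b.coord)) = ⊥ := by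
    refine eq_bot_iff.2 fun x hx ↦ b.forall_coord_eq_zero_iff.1 fun i ↦ le_antisymm ?_ ?_
    · simpa using hx (Or.inr ⟨i, rfl⟩)
    · exact hx (Or.inl ⟨i, rfl⟩)
  rw [← hdual]
  exact .dual_of_finite _ ((Set.finite_range _).union (Set.finite_range _))

lemma mem_sup_hull_singleton_iff {C : PointedCone R W} {v x : W} :
    x ∈ C ⊔ PointedCone.hull R {v} ↔ ∃ t : R, 0 ≤ t ∧ x - t • v ∈ C := by
  simp only [PointedCone.hull, Submodule.mem_sup, Submodule.mem_span_singleton]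
  constructor
  · rintro ⟨y, hy, -, ⟨t, rfl⟩, rfl⟩
    exact ⟨t, t.2, by simpa [← NNReal.smul_def] using hy⟩
  · rintro ⟨t, ht, hx⟩
    exact ⟨_, hx, _, ⟨⟨t, ht⟩, rfl⟩, sub_add_cancel _ _⟩

lemma dualFG_sup_hull_singleton {C : PointedCone R W} (hC : C.DualFG (.id : Dual R W →ₗ[R] _))
    (v : W) : (C ⊔ PointedCone.hull R {v}).DualFG (.id : Dual R W →ₗ[R] _) := by
  classical
  obtain ⟨H, rfl⟩ := hC
  refine ⟨H.filter (0 ≤ · v) ∪ ((H.filter (0 < · v) ×ˢ H.filter (· v < 0)).image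
    fun g ↦ g.1 v • g.2 - g.2 v • g.1), PointedCone.ext fun x ↦ ?_⟩
  rw [mem_sup_hull_singleton_iff]
  simp only [PointedCone.mem_dual, SetLike.mem_coe, LinearMap.id_apply, map_sub, map_smul,
    smul_eq_mul, sub_nonneg, exists_nonneg_forall_mul_le_iff, Finset.mem_union, Finset.mem_filter,
    Finset.mem_image, Finset.mem_product, Prod.exists]
  constructor
  · intro hx
    refine ⟨fun h hh hv ↦ hx (.inl ⟨hh, hv⟩), fun h hh g hg hhv hgv ↦ ?_⟩
    simpa using hx (.inr ⟨h, g, ⟨⟨hh, hhv⟩, hg, hgv⟩, rfl⟩)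
  · rintro ⟨hnonneg, hpair⟩ h (⟨hh, hv⟩ | ⟨h, g, ⟨⟨hh, hhv⟩, hg, hgv⟩, rfl⟩)
    · exact hnonneg h hh hv
    · simpa using hpair h hh g hg hhv hgv

/-- One direction of the Minkowski–Weyl theorem, by Fourier–Motzkin elimination of the generators
one at a time. -/
theorem dualFG_of_fg [FiniteDimensional R W] {C : PointedCone R W} (hC : C.FG) :
    C.DualFG (.id : Dual R W →ₗ[R] _) := by
  classical
  obtain ⟨s, rfl⟩ := hC
  induction s using Finset.induction_on with
  | empty => simpa using dualFG_bot
  | insert v s _ ih =>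
    rw [Finset.coe_insert, Submodule.span_insert, sup_comm]
    exact dualFG_sup_hull_singleton ih v

end MinkowskiWeyl

section Coloring

variable {W ι : Type*} [AddCommGroup W] [Module ℝ W]

/-- After rescaling the vectors to the affine hyperplane `u = 1`, the ray of a vector of maximal
Euclidean norm is exposed. -/
lemma exists_forall_nonneg_and_eq_zero_imp_mem_span [FiniteDimensional ℝ W] [Finite ι]
    [Nonempty ι] {v : ι → W} {u : Dual ℝ W} (hu : ∀ i, 0 < u (v i)) :
    ∃ (i₀ : ι) (g : Dual ℝ W), (∀ i, 0 ≤ g (v i)) ∧ g (v i₀) = 0 ∧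
      ∀ i, g (v i) = 0 → v i ∈ Submodule.span ℝ {v i₀} := by
  let φ : W ≃ₗ[ℝ] EuclideanSpace ℝ (Fin (finrank ℝ W)) := (finBasis ℝ W).equivFun.trans
    (WithLp.linearEquiv 2 ℝ _).symm
  let e (i : ι) := φ ((u (v i))⁻¹ • v i)
  obtain ⟨i₀, hmax⟩ := Finite.exists_max fun i ↦ ‖e i‖
  let g : Dual ℝ W := ‖e i₀‖ ^ 2 • u - (innerₛₗ ℝ (e i₀)).comp φ.toLinearMap
  have hg (i : ι) : g (v i) = u (v i) * (‖e i₀‖ ^ 2 - inner ℝ (e i₀) (e i)) := by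
    have hφ : φ (v i) = u (v i) • e i := by
      simp [e, smul_inv_smul₀ (hu i).ne']
    simp [g, hφ, inner_smul_right]
    ring
  have hdist (i : ι) : ‖e i₀ - e i‖ ^ 2 ≤ 2 * (‖e i₀‖ ^ 2 - inner ℝ (e i₀) (e i)) := by
    have hle := pow_le_pow_left₀ (norm_nonneg _) (hmax i) 2
    rw [norm_sub_sq_real]
    linarith
  refine ⟨i₀, g, fun i ↦ ?_, by simp [hg], fun i hi ↦ ?_⟩
  · rw [hg]
    exact mul_nonneg (hu i).le (by linarith [hdist i, sq_nonneg ‖e i₀ - e i‖])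
  · have hzero := (mul_eq_zero.1 ((hg i).symm.trans hi)).resolve_left (hu i).ne'
    have heq : e i₀ = e i := by
      rw [← sub_eq_zero, ← norm_eq_zero, ← sq_eq_zero_iff]
      exact le_antisymm ((hdist i).trans (by rw [hzero, mul_zero])) (sq_nonneg _)
    refine Submodule.mem_span_singleton.2 ⟨u (v i) * (u (v i₀))⁻¹, ?_⟩
    rw [mul_smul, φ.injective heq, smul_inv_smul₀ (hu i).ne']

lemma span_range_mkQ_notMem_eq_top {v : ι → W} (hspan : Submodule.span ℝ (Set.range v) = ⊤)
    (K : Submodule ℝ W) :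
    Submodule.span ℝ (Set.range fun i : {i // v i ∉ K} ↦ K.mkQ (v i)) = ⊤ := by
  rw [eq_top_iff, ← K.range_mkQ, LinearMap.range_eq_map, ← hspan, Submodule.map_span_le]
  rintro _ ⟨i, rfl⟩
  by_cases hi : v i ∈ K
  · rw [Submodule.mkQ_apply, (Submodule.Quotient.mk_eq_zero K).2 hi]
    exact zero_mem _
  · exact Submodule.subset_span ⟨⟨i, hi⟩, rfl⟩

lemma exists_forall_pos_add_mul [Finite ι] {a b : ι → ℝ} (ha : ∀ i, 0 < a i) :
    ∃ ε > 0, ∀ i, 0 < a i + ε * b i := by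
  have hlim (i : ι) : Tendsto (fun ε ↦ a i + ε * b i) (𝓝[>] 0) (𝓝 (a i)) := by
    have hcont : Continuous fun ε ↦ a i + ε * b i := by fun_prop
    simpa using (hcont.tendsto 0).mono_left nhdsWithin_le_nhds
  have hpos : ∀ᶠ ε in 𝓝[>] (0 : ℝ), ∀ i, 0 < a i + ε * b i :=
    eventually_all.2 fun i ↦ (hlim i).eventually_const_lt (ha i)
  exact (eventually_mem_nhdsWithin.and hpos).exists

/-- A small multiple of `u` decides the signs on `K` without affecting those off `K`. -/
lemma exists_dual_extending_signs [Finite ι] {v : ι → W} {u : Dual ℝ W} (hu : ∀ i, 0 < u (v i))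
    {K : Submodule ℝ W} {l : Dual ℝ (W ⧸ K)} {s₀ : ℝ} (hs₀ : s₀ ≠ 0) {s : {i // v i ∉ K} → ℝ}
    (hl : ∀ i, 0 < s i * l (K.mkQ (v i))) :
    ∃ l' : Dual ℝ W, (∀ i, v i ∈ K → 0 < s₀ * l' (v i)) ∧ ∀ i, 0 < s i * l' (v i) := by
  obtain ⟨ε, hε, hpos⟩ := exists_forall_pos_add_mul (b := fun i ↦ s i * (s₀ * u (v i))) hl
  refine ⟨l.comp K.mkQ + (ε * s₀) • u, fun i hi ↦ ?_, fun i ↦ ?_⟩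
  · have hmkQ : K.mkQ (v i) = 0 := (Submodule.Quotient.mk_eq_zero K).2 hi
    calc 0 < ε * u (v i) * (s₀ * s₀) := mul_pos (mul_pos hε (hu i)) (mul_self_pos.2 hs₀)
      _ = s₀ * (l.comp K.mkQ + (ε * s₀) • u) (v i) := by
        simp only [LinearMap.add_apply, LinearMap.comp_apply, hmkQ, map_zero, zero_add,
          LinearMap.smul_apply, smul_eq_mul]
        ring
  · calc 0 < s i * l (K.mkQ (v i)) + ε * (s i * (s₀ * u (v i))) := hpos i
      _ = s i * (l.comp K.mkQ + (ε * s₀) • u) (v i) := by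
        simp only [LinearMap.add_apply, LinearMap.comp_apply, LinearMap.smul_apply, smul_eq_mul]
        ring

/-- Every sign pattern on the `n` colours is realised by a linear functional. The colour classes
are peeled off one at a time: the vectors on an exposed ray get a colour of their own, and the
remaining ones are coloured after dividing out the ray. -/
lemma exists_coloring_forall_sign [FiniteDimensional ℝ W] {n : ℕ} (hn : finrank ℝ W = n)
    [Finite ι] {v : ι → W} {u : Dual ℝ W} (hspan : Submodule.span ℝ (Set.range v) = ⊤)
    (hu : ∀ i, 0 < u (v i)) :
    ∃ c : ι → Fin n, Function.Surjective c ∧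
      ∀ s : Fin n → ℝ, (∀ k, s k ≠ 0) → ∃ l : Dual ℝ W, ∀ i, 0 < s (c i) * l (v i) := by
  induction n generalizing W ι with
  | zero =>
    have : Subsingleton W := finrank_zero_iff.1 hn
    have : IsEmpty ι := ⟨fun i ↦ by simpa [Subsingleton.elim (v i) 0] using hu i⟩
    exact ⟨isEmptyElim, fun k ↦ k.elim0, fun _ _ ↦ ⟨0, isEmptyElim⟩⟩
  | succ n ih =>
    have : Nonempty ι := by
      by_contra! hι
      rw [← finrank_top, ← hspan, Set.range_eq_empty, Submodule.span_empty, finrank_bot] at hn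
      lia
    obtain ⟨i₀, g, hg, hg₀, hray⟩ := exists_forall_nonneg_and_eq_zero_imp_mem_span hu
    let K := Submodule.span ℝ {v i₀}
    have hKg : K ≤ LinearMap.ker g := by simpa [K, Submodule.span_le] using hg₀
    have hfinrank : finrank ℝ (W ⧸ K) = n := by
      have hv₀ : v i₀ ≠ 0 := fun h ↦ by simpa [h] using hu i₀
      have := K.finrank_quotient_add_finrank
      rw [finrank_span_singleton hv₀] at this
      lia
    obtain ⟨c, hc, hsign⟩ := ih (u := K.liftQ g hKg) hfinrank
      (span_range_mkQ_notMem_eq_top hspan K) fun i ↦ (hg i).lt_of_ne' fun hi ↦ i.2 (hray i hi)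
    classical
    refine ⟨fun i ↦ if hi : v i ∈ K then 0 else (c ⟨i, hi⟩).succ, ?_, fun s hs ↦ ?_⟩
    · refine Fin.cases ⟨i₀, dif_pos (Submodule.mem_span_singleton_self _)⟩ fun k ↦ ?_
      obtain ⟨i, rfl⟩ := hc k
      exact ⟨i, dif_neg i.2⟩
    · obtain ⟨l, hl⟩ := hsign (s ∘ Fin.succ) fun k ↦ hs k.succ
      obtain ⟨l', hl'_mem, hl'_notMem⟩ := exists_dual_extending_signs hu (hs 0) hl
      refine ⟨l', fun i ↦ ?_⟩
      by_cases hi : v i ∈ K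
      · simpa [hi] using hl'_mem i hi
      · simpa [hi] using hl'_notMem ⟨i, hi⟩

end Coloring

section Push

variable {W : Type*} [AddCommGroup W] [Module ℝ W] {H : Finset (Dual ℝ W)} {x : W}

open Classical in
/-- The largest multiple of `v` that can be subtracted from a point `x` of the polyhedral cone
`{x | ∀ h ∈ H, 0 ≤ h x}` without leaving it, with junk value `0` if there is no largest one. -/
noncomputable def maxCoeff (H : Finset (Dual ℝ W)) (v x : W) : ℝ :=
  if hH : (H.filter fun h ↦ 0 < h v).Nonempty then
    (H.filter fun h ↦ 0 < h v).inf' hH fun h ↦ h x / h v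
  else 0

lemma maxCoeff_nonneg (hx : ∀ h ∈ H, 0 ≤ h x) (v : W) : 0 ≤ maxCoeff H v x := by
  classical
  unfold maxCoeff
  split_ifs with hH
  · refine Finset.le_inf' _ _ fun h hh ↦ ?_
    exact div_nonneg (hx h (Finset.mem_filter.1 hh).1) (Finset.mem_filter.1 hh).2.le
  · exact le_rfl

lemma maxCoeff_mul_le {v : W} {h : Dual ℝ W} (hh : h ∈ H) (hv : 0 < h v) (x : W) :
    maxCoeff H v x * h v ≤ h x := by
  classical
  have hmem : h ∈ H.filter fun h ↦ 0 < h v := Finset.mem_filter.2 ⟨hh, hv⟩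
  rw [maxCoeff, dif_pos ⟨h, hmem⟩, ← le_div_iff₀ hv]
  exact Finset.inf'_le (fun h ↦ h x / h v) hmem

lemma exists_maxCoeff_mul_eq {v : W} (hv : ∃ h ∈ H, 0 < h v) (x : W) :
    ∃ h ∈ H, 0 < h v ∧ maxCoeff H v x * h v = h x := by
  classical
  obtain ⟨h, hh, hhv⟩ := hv
  have hne : (H.filter fun h ↦ 0 < h v).Nonempty := ⟨h, Finset.mem_filter.2 ⟨hh, hhv⟩⟩
  obtain ⟨g, hg, hmin⟩ := Finset.exists_mem_eq_inf' hne fun h ↦ h x / h v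
  obtain ⟨hgH, hgv⟩ := Finset.mem_filter.1 hg
  exact ⟨g, hgH, hgv, by rw [maxCoeff, dif_pos hne, hmin, div_mul_cancel₀ _ hgv.ne']⟩

lemma nonneg_sub_maxCoeff_smul {v : W} (hv : ∀ h ∈ H, 0 ≤ h v) (hx : ∀ h ∈ H, 0 ≤ h x) {a : ℝ}
    (ha : a ≤ 1) : ∀ h ∈ H, 0 ≤ h (x - (a * maxCoeff H v x) • v) := by
  intro h hh
  rw [map_sub, map_smul, smul_eq_mul, sub_nonneg]
  rcases (hv h hh).eq_or_lt' with hhv | hhv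
  · simpa [hhv] using hx h hh
  · have hnonneg := mul_nonneg (maxCoeff_nonneg hx v) hhv.le
    calc a * maxCoeff H v x * h v = a * (maxCoeff H v x * h v) := mul_assoc _ _ _
      _ ≤ maxCoeff H v x * h v := mul_le_of_le_one_left hnonneg ha
      _ ≤ h x := maxCoeff_mul_le hh hhv x

variable {ι : Type*} {v : ι → W} {ρ : ι → ℝ}

/-- Push `x` away from the vectors `v i`, for `i` running through the list from right to left, each
time by the proportion `ρ i` of the way to the boundary of the cone defined by `H`. -/
noncomputable def pushAway (H : Finset (Dual ℝ W)) (v : ι → W) (ρ : ι → ℝ) (x : W)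
    (l : List ι) : W :=
  l.foldr (fun i y ↦ y - (ρ i * maxCoeff H (v i) y) • v i) x

lemma nonneg_pushAway (hv : ∀ i, ∀ h ∈ H, 0 ≤ h (v i)) (hρ : ∀ i, ρ i ≤ 1)
    (hx : ∀ h ∈ H, 0 ≤ h x) (l : List ι) : ∀ h ∈ H, 0 ≤ h (pushAway H v ρ x l) := by
  induction l with
  | nil => exact hx
  | cons i l ih => exact nonneg_sub_maxCoeff_smul (hv i) ih (hρ i)

lemma le_apply_pushAway (hv : ∀ i, ∀ h ∈ H, 0 ≤ h (v i)) (hρ : ∀ i, ρ i ∈ Set.Icc 0 1)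
    (hx : ∀ h ∈ H, 0 ≤ h x) {g : Dual ℝ W} (hg : ∀ i, ρ i = 0 ∨ g (v i) ≤ 0) (l : List ι) :
    g x ≤ g (pushAway H v ρ x l) := by
  induction l with
  | nil => exact le_rfl
  | cons i l ih =>
    refine ih.trans ?_
    simp only [pushAway, List.foldr_cons, map_sub, map_smul, smul_eq_mul, le_sub_self_iff]
    rcases hg i with hi | hi
    · simp [hi]
    · have hnonneg := maxCoeff_nonneg (nonneg_pushAway hv (fun i ↦ (hρ i).2) hx l) (v i)
      exact mul_nonpos_of_nonneg_of_nonpos (mul_nonneg (hρ i).1 hnonneg) hi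

lemma exists_apply_pushAway_eq_zero (hv : ∀ i, ∀ h ∈ H, 0 ≤ h (v i))
    (hρ : ∀ i, ρ i ∈ Set.Icc 0 1) (hx : ∀ h ∈ H, 0 ≤ h x) {i : ι} (hi : ρ i = 1)
    (hpos : ∃ h ∈ H, 0 < h (v i)) {l : List ι} (hil : i ∈ l) :
    ∃ h ∈ H, h (pushAway H v ρ x l) = 0 ∧ 0 < h (v i) := by
  have hle (i) : ρ i ≤ 1 := (hρ i).2
  induction l with
  | nil => simp at hil
  | cons j l ih =>
    set y := pushAway H v ρ x l
    have hcons : pushAway H v ρ x (j :: l) = y - (ρ j * maxCoeff H (v j) y) • v j := rfl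
    rcases List.mem_cons.1 hil with rfl | hil
    · obtain ⟨h, hh, hhv, heq⟩ := exists_maxCoeff_mul_eq hpos y
      exact ⟨h, hh, by simp [hcons, hi, heq], hhv⟩
    · obtain ⟨h, hh, hzero, hhv⟩ := ih hil
      refine ⟨h, hh, le_antisymm ?_ (nonneg_pushAway hv hle hx _ h hh), hhv⟩
      have hcoeff := maxCoeff_nonneg (nonneg_pushAway hv hle hx l) (v j)
      have := mul_nonneg (mul_nonneg (hρ j).1 hcoeff) (hv j h hh)
      simpa [hcons, hzero] using this

lemma exists_inv_lt_of_mem_stdSimplex {n : ℕ} {p : Fin n → ℝ} (hp : p ∈ stdSimplex ℝ (Fin n)) :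
    ∃ k, ((n : ℝ) + 1)⁻¹ < p k := by
  by_contra! hle
  have hsum : ∑ k, p k ≤ n * ((n : ℝ) + 1)⁻¹ := by
    simpa using Finset.sum_le_sum fun k (_ : k ∈ Finset.univ) ↦ hle k
  rw [hp.2, ← div_eq_mul_inv, le_div_iff₀ (by positivity)] at hsum
  linarith

variable {n : ℕ} {c : ι → Fin n}

/-- The point of the cone attached to the weights `p` on the colours before it is pushed away from
the vectors of small weight. -/
noncomputable def conePoint [Fintype ι] (v : ι → W) (c : ι → Fin n) (p : Fin n → ℝ) : W :=
  ∑ i, max 0 (p (c i) - ((n : ℝ) + 1)⁻¹) • v i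

lemma apply_conePoint_pos [Fintype ι] (hc : Function.Surjective c) {p : Fin n → ℝ}
    (hp : p ∈ stdSimplex ℝ (Fin n)) {g : Dual ℝ W}
    (hg : ∀ i, ((n : ℝ) + 1)⁻¹ ≤ p (c i) → 0 < g (v i)) : 0 < g (conePoint v c p) := by
  obtain ⟨k, hk⟩ := exists_inv_lt_of_mem_stdSimplex hp
  obtain ⟨i, rfl⟩ := hc k
  simp only [conePoint, map_sum, map_smul, smul_eq_mul]
  refine Finset.sum_pos' (fun j _ ↦ ?_) ⟨i, Finset.mem_univ i, ?_⟩
  · rcases le_total ((n : ℝ) + 1)⁻¹ (p (c j)) with hj | hj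
    · exact mul_nonneg (le_max_left _ _) (hg j hj).le
    · rw [max_eq_left (sub_nonpos.2 hj), zero_mul]
  · exact mul_pos (lt_max_of_lt_right (sub_pos.2 hk)) (hg i hk.le)

variable [TopologicalSpace W] [IsTopologicalAddGroup W] [ContinuousSMul ℝ W] [T2Space W]
  [FiniteDimensional ℝ W]

lemma continuous_maxCoeff (H : Finset (Dual ℝ W)) (v : W) : Continuous (maxCoeff H v) := by
  classical
  unfold maxCoeff
  split_ifs with hH
  · exact .finset_inf'_apply hH fun h _ ↦ h.continuous_of_finiteDimensional.div_const _
  · exact continuous_const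

lemma continuous_pushAway {X : Type*} [TopologicalSpace X] {ρ : X → ι → ℝ} {x : X → W}
    (hρ : Continuous ρ) (hx : Continuous x) (H : Finset (Dual ℝ W)) (v : ι → W) (l : List ι) :
    Continuous fun t ↦ pushAway H v (ρ t) (x t) l := by
  induction l with
  | nil => exact hx
  | cons i l ih =>
    have hcoeff := (continuous_maxCoeff H (v i)).comp ih
    exact ih.sub ((((continuous_apply i).comp hρ).mul hcoeff).smul continuous_const)

/-- A functional that is positive on the vectors of large weight and negative on the others is
positive on `X p`, which is therefore non-zero. -/
lemma exists_continuous_cone_map [Finite ι] (hv : ∀ i, ∀ h ∈ H, 0 ≤ h (v i))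
    (hpos : ∀ i, ∃ h ∈ H, 0 < h (v i)) (hc : Function.Surjective c)
    (hsign : ∀ s : Fin n → ℝ, (∀ k, s k ≠ 0) → ∃ l : Dual ℝ W, ∀ i, 0 < s (c i) * l (v i)) :
    ∃ X : (Fin n → ℝ) → W, Continuous X ∧ ∀ p ∈ stdSimplex ℝ (Fin n),
      (∀ h ∈ H, 0 ≤ h (X p)) ∧ X p ≠ 0 ∧
        ∀ i, p (c i) = 0 → ∃ h ∈ H, h (X p) = 0 ∧ 0 < h (v i) := by
  cases nonempty_fintype ι
  let η : ℝ := ((n : ℝ) + 1)⁻¹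
  have hη : 0 < η := by positivity
  let ρ (p : Fin n → ℝ) (i : ι) : ℝ := max 0 (1 - max 0 (p (c i)) / η)
  have hρ (p i) : ρ p i ∈ Set.Icc 0 1 :=
    ⟨le_max_left _ _, max_le zero_le_one (sub_le_self _ (by positivity))⟩
  have hρ_zero {p i} (hi : η ≤ p (c i)) : ρ p i = 0 := by
    refine max_eq_left (sub_nonpos.2 ((one_le_div hη).2 (le_max_of_le_right hi)))
  refine ⟨fun p ↦ pushAway H v (ρ p) (conePoint v c p) Finset.univ.toList,
    continuous_pushAway (by fun_prop) (by unfold conePoint; fun_prop) H v _, fun p hp ↦ ?_⟩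
  have hcone (h) (hh : h ∈ H) : 0 ≤ h (conePoint v c p) := by
    simp only [conePoint, map_sum, map_smul, smul_eq_mul]
    exact Finset.sum_nonneg fun i _ ↦ mul_nonneg (le_max_left _ _) (hv i h hh)
  refine ⟨nonneg_pushAway hv (fun i ↦ (hρ p i).2) hcone _, fun hzero ↦ ?_, fun i hi ↦ ?_⟩
  · obtain ⟨g, hg⟩ := hsign (fun k ↦ if η ≤ p k then 1 else -1) fun k ↦ by split_ifs <;> simp
    have hg_pos : 0 < g (conePoint v c p) := apply_conePoint_pos hc hp fun i hi ↦ by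
      have := hg i
      rwa [if_pos hi, one_mul] at this
    have hg_neg (i) : ρ p i = 0 ∨ g (v i) ≤ 0 := by
      by_cases hi : η ≤ p (c i)
      · exact .inl (hρ_zero hi)
      · have := hg i
        rw [if_neg hi] at this
        exact .inr (by linarith)
    have hle := le_apply_pushAway hv (hρ p) hcone hg_neg Finset.univ.toList
    exact hle.not_gt (by simpa [hzero] using hg_pos)
  · exact exists_apply_pushAway_eq_zero hv (hρ p) hcone (by simp [ρ, hi]) (hpos i) (by simp)

end Push

section Homogenization

variable {E ι : Type*} [AddCommGroup E] [Module ℝ E] {y : ι → E}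

lemma span_range_one_prod_eq_top (hy : affineSpan ℝ (Set.range y) = ⊤) :
    Submodule.span ℝ (Set.range fun i ↦ ((1, y i) : ℝ × E)) = ⊤ := by
  set S := Submodule.span ℝ (Set.range fun i ↦ ((1, y i) : ℝ × E))
  have hone (z : E) : ((1, z) : ℝ × E) ∈ S := by
    let A : AffineSubspace ℝ E := S.toAffineSubspace.comap
      ((LinearMap.inr ℝ ℝ E).toAffineMap + AffineMap.const ℝ E ((1, 0) : ℝ × E))
    have hA : A = ⊤ := by
      rw [eq_top_iff, ← hy, affineSpan_le]
      rintro _ ⟨i, rfl⟩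
      have hi : ((1, y i) : ℝ × E) ∈ S := Submodule.subset_span ⟨i, rfl⟩
      simpa [A] using hi
    have hz : z ∈ A := by simp [hA]
    simpa [A] using hz
  refine eq_top_iff.2 fun x _ ↦ ?_
  have hx : x = (1, x.2) + (x.1 - 1) • (1, 0) := by ext <;> simp
  rw [hx]
  exact S.add_mem (hone _) (S.smul_mem _ (hone _))

lemma mem_hull_range_iff [Fintype ι] {W : Type*} [AddCommGroup W] [Module ℝ W] {v : ι → W}
    {x : W} :
    x ∈ PointedCone.hull ℝ (Set.range v) ↔
      ∃ w : ι → ℝ, (∀ i, 0 ≤ w i) ∧ ∑ i, w i • v i = x := by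
  rw [PointedCone.hull, Submodule.mem_span_range_iff_exists_fun]
  constructor
  · rintro ⟨w, rfl⟩
    exact ⟨fun i ↦ w i, fun i ↦ (w i).2, rfl⟩
  · rintro ⟨w, hw, rfl⟩
    exact ⟨fun i ↦ ⟨w i, hw i⟩, rfl⟩

lemma one_prod_mem_hull_iff [Finite ι] {z : E} :
    ((1, z) : ℝ × E) ∈ PointedCone.hull ℝ (Set.range fun i ↦ ((1, y i) : ℝ × E)) ↔
      z ∈ convexHull ℝ (Set.range y) := by
  cases nonempty_fintype ι
  constructor
  · rw [mem_hull_range_iff]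
    rintro ⟨w, hw, hsum⟩
    rw [Prod.ext_iff, Prod.fst_sum, Prod.snd_sum] at hsum
    exact mem_convexHull_of_exists_fintype w y hw (by simpa using hsum.1) Set.mem_range_self
      (by simpa using hsum.2)
  · let C := PointedCone.hull ℝ (Set.range fun i ↦ ((1, y i) : ℝ × E))
    have hconvex : Convex ℝ {z | ((1, z) : ℝ × E) ∈ C} := by
      intro a ha b hb s t hs ht hst
      simpa [hst] using C.convex ha hb hs ht hst
    refine fun hz ↦ convexHull_min ?_ hconvex hz
    rintro _ ⟨i, rfl⟩
    exact PointedCone.subset_hull ⟨i, rfl⟩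

lemma fst_pos_of_mem_hull {x : ℝ × E}
    (hx : x ∈ PointedCone.hull ℝ (Set.range fun i ↦ ((1, y i) : ℝ × E))) (hx₀ : x ≠ 0) :
    0 < x.1 := by
  suffices x = 0 ∨ 0 < x.1 from this.resolve_left hx₀
  clear hx₀
  induction hx using Submodule.span_induction with
  | mem x hx =>
    obtain ⟨i, rfl⟩ := hx
    exact .inr one_pos
  | zero => exact .inl rfl
  | add a b _ _ ha hb =>
    rcases ha with rfl | ha
    · simpa using hb
    · rcases hb with rfl | hb
      · simpa using Or.inr ha
      · exact .inr (add_pos ha hb)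
  | smul t a _ ha =>
    rcases ha with rfl | ha
    · simp
    · rcases t.2.eq_or_lt' with ht | ht
      · have ht₀ : t = 0 := Subtype.ext ht
        exact .inl (by rw [ht₀, zero_smul])
      · exact .inr (mul_pos ht ha)

end Homogenization

section Face

variable {E : Type*} [AddCommGroup E] [Module ℝ E] {H : Finset (Dual ℝ (ℝ × E))}
  {x : ℝ × E}

/-- The polyhedron defined by finitely many affine inequalities, encoded as linear functionals on
the homogenisation `ℝ × E` of `E`. -/
def polyhedron (H : Finset (Dual ℝ (ℝ × E))) : Set E :=
  {z | ∀ h ∈ H, 0 ≤ h (1, z)}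

/-- The face of `polyhedron H` on which all the inequalities that are tight at the homogeneous
coordinates `x` are tight. -/
def tightFace (H : Finset (Dual ℝ (ℝ × E))) (x : ℝ × E) : Set E :=
  {z ∈ polyhedron H | ∀ h ∈ H, h x = 0 → h (1, z) = 0}

lemma inv_fst_smul_snd_mem_tightFace (hx : ∀ h ∈ H, 0 ≤ h x) (hx₁ : 0 < x.1) :
    x.1⁻¹ • x.2 ∈ tightFace H x := by
  have hone : ((1, x.1⁻¹ • x.2) : ℝ × E) = x.1⁻¹ • x := by ext <;> simp [hx₁.ne']
  refine ⟨fun h hh ↦ ?_, fun h _ hzero ↦ ?_⟩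
  · rw [hone, map_smul]
    exact mul_nonneg (inv_nonneg.2 hx₁.le) (hx h hh)
  · rw [hone, map_smul, hzero, smul_zero]

lemma isExposed_tightFace [TopologicalSpace E] [IsTopologicalAddGroup E] [ContinuousSMul ℝ E]
    [T2Space E] [FiniteDimensional ℝ E] (H : Finset (Dual ℝ (ℝ × E))) (x : ℝ × E) :
    IsExposed ℝ (polyhedron H) (tightFace H x) := by
  classical
  rintro ⟨z₀, hz₀⟩
  let g : Dual ℝ (ℝ × E) := ∑ h ∈ H with h x = 0, h
  have hg (z) : g (1, z) = ∑ h ∈ H with h x = 0, h (1, z) := by simp [g]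
  have hg_nonneg {z} (hz : z ∈ polyhedron H) : 0 ≤ g (1, z) := by
    rw [hg]
    exact Finset.sum_nonneg fun h hh ↦ hz h (Finset.mem_filter.1 hh).1
  have hg_eq_zero {z} (hz : z ∈ polyhedron H) : g (1, z) = 0 ↔ z ∈ tightFace H x := by
    rw [hg, Finset.sum_eq_zero_iff_of_nonneg fun h hh ↦ hz h (Finset.mem_filter.1 hh).1]
    simp [tightFace, hz]
  have hsub (z w : E) : g (0, w) - g (0, z) = g (1, w) - g (1, z) := by
    simp [← map_sub]
  refine ⟨-(g.comp (LinearMap.inr ℝ ℝ E)).toContinuousLinearMap, Set.ext fun z ↦ ?_⟩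
  simp only [neg_apply, LinearMap.coe_toContinuousLinearMap',
    LinearMap.comp_apply, LinearMap.inr_apply, neg_le_neg_iff, Set.mem_ofPred_eq]
  refine ⟨fun hz ↦ ⟨hz.1, fun w hw ↦ ?_⟩, fun ⟨hz, hmax⟩ ↦ ?_⟩
  · linarith [hsub z w, (hg_eq_zero hz.1).2 hz, hg_nonneg hw]
  · refine (hg_eq_zero hz).1 (le_antisymm ?_ (hg_nonneg hz))
    linarith [hsub z z₀, (hg_eq_zero hz₀.1).2 hz₀, hmax z₀ hz₀.1]

end Face

section Exposed

variable {E : Type*} [NormedAddCommGroup E] [NormedSpace ℝ E]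

lemma subset_frontier_of_isExposed {A B : Set E} (hB : IsExposed ℝ A B) (hne : B ≠ A) :
    B ⊆ frontier A := by
  refine fun z hz ↦ ⟨subset_closure (hB.subset hz), fun hint ↦ hne ?_⟩
  obtain ⟨l, rfl⟩ := hB ⟨z, hz⟩
  have hmax : IsLocalMax l z := by
    filter_upwards [mem_interior_iff_mem_nhds.1 hint] with w hw using hz.2 w hw
  have hl : l = 0 := hmax.hasFDerivAt_eq_zero l.hasFDerivAt
  simp [hl]

lemma exists_mem_of_isExposed_convexHull {V B : Set E} (hV : V.Finite)
    (hB : IsExposed ℝ (convexHull ℝ V) B) (hne : B.Nonempty) : ∃ v ∈ V, v ∈ B := by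
  obtain ⟨v, hv⟩ := (hB.isCompact (hV.isCompact_convexHull ℝ)).extremePoints_nonempty hne
  exact ⟨v, extremePoints_convexHull_subset
    (hB.isExtreme.extremePoints_subset_extremePoints hv), hv.1⟩

end Exposed

section FaceMap

variable {E ι : Type*}

lemma convexHull_range_eq_polyhedron [AddCommGroup E] [Module ℝ E] [Finite ι] {y : ι → E}
    {H : Finset (Dual ℝ (ℝ × E))}
    (hH : PointedCone.dual (.id : Dual ℝ (ℝ × E) →ₗ[ℝ] _) (H : Set (Dual ℝ (ℝ × E))) =
      PointedCone.hull ℝ (Set.range fun i ↦ ((1, y i) : ℝ × E))) :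
    convexHull ℝ (Set.range y) = polyhedron H := by
  ext z
  rw [← one_prod_mem_hull_iff, ← hH]
  rfl

lemma exists_pos_apply_one_prod [AddCommGroup E] [Module ℝ E] {y : ι → E}
    {H : Finset (Dual ℝ (ℝ × E))}
    (hH : PointedCone.dual (.id : Dual ℝ (ℝ × E) →ₗ[ℝ] _) (H : Set (Dual ℝ (ℝ × E))) =
      PointedCone.hull ℝ (Set.range fun i ↦ ((1, y i) : ℝ × E))) (z : E) :
    ∃ h ∈ H, 0 < h (1, z) := by
  by_contra! hle
  have hmem : (-(1, z) : ℝ × E) ∈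
      PointedCone.hull ℝ (Set.range fun i ↦ ((1, y i) : ℝ × E)) := by
    rw [← hH]
    intro h hh
    rw [LinearMap.id_apply, map_neg]
    exact neg_nonneg.2 (hle h hh)
  have hpos := fst_pos_of_mem_hull hmem (by simp)
  norm_num at hpos

variable [NormedAddCommGroup E] [NormedSpace ℝ E] [FiniteDimensional ℝ E]

lemma exists_continuous_homogeneous_map [Finite ι] {y : ι → E}
    (hy : affineSpan ℝ (Set.range y) = ⊤) :
    ∃ (H : Finset (Dual ℝ (ℝ × E))) (c : ι → Fin (finrank ℝ E + 1))
      (X : (Fin (finrank ℝ E + 1) → ℝ) → ℝ × E),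
      convexHull ℝ (Set.range y) = polyhedron H ∧ Function.Surjective c ∧ Continuous X ∧
        ∀ p ∈ stdSimplex ℝ (Fin (finrank ℝ E + 1)), (∀ h ∈ H, 0 ≤ h (X p)) ∧ 0 < (X p).1 ∧
          ∀ i, p (c i) = 0 → y i ∉ tightFace H (X p) := by
  let C := PointedCone.hull ℝ (Set.range fun i ↦ ((1, y i) : ℝ × E))
  obtain ⟨H, hH⟩ := dualFG_of_fg (C := C) (Submodule.fg_span (Set.finite_range _))
  have hfinrank : finrank ℝ (ℝ × E) = finrank ℝ E + 1 := by simp [add_comm]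
  obtain ⟨c, hc, hsign⟩ := exists_coloring_forall_sign hfinrank
    (span_range_one_prod_eq_top hy) (u := .fst ℝ ℝ E) fun _ ↦ one_pos
  obtain ⟨X, hX, hXp⟩ := exists_continuous_cone_map (H := H)
    (fun i h hh ↦ (hH.ge (PointedCone.subset_hull ⟨i, rfl⟩) : _) hh)
    (fun i ↦ exists_pos_apply_one_prod hH (y i)) hc hsign
  refine ⟨H, c, X, convexHull_range_eq_polyhedron hH, hc, hX, fun p hp ↦ ?_⟩
  obtain ⟨hnonneg, hne, hsep⟩ := hXp p hp
  refine ⟨hnonneg, fst_pos_of_mem_hull (hH.le fun h hh ↦ hnonneg h hh) hne, fun i hi hmem ↦ ?_⟩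
  obtain ⟨h, hh, hzero, hpos⟩ := hsep i hi
  exact hpos.ne' (hmem.2 h hh hzero)

lemma exists_continuousOn_face_map {V : Set E} (hV : V.Finite)
    (hfull : (interior (convexHull ℝ V)).Nonempty) :
    ∃ (ψ : (Fin (finrank ℝ E + 1) → ℝ) → E) (face : (Fin (finrank ℝ E + 1) → ℝ) → Set E),
      ContinuousOn ψ (stdSimplex ℝ (Fin (finrank ℝ E + 1))) ∧
      (∀ p ∈ stdSimplex ℝ (Fin (finrank ℝ E + 1)), ψ p ∈ face p ∧
        IsExposed ℝ (convexHull ℝ V) (face p) ∧ ((∃ k, p k = 0) → face p ≠ convexHull ℝ V)) ∧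
      ∀ p q, (∀ k, p k = 0 ∨ q k = 0) → p ∈ stdSimplex ℝ (Fin (finrank ℝ E + 1)) →
        q ∈ stdSimplex ℝ (Fin (finrank ℝ E + 1)) → face p ∩ face q = ∅ := by
  have := hV.to_subtype
  have hrange : Set.range (Subtype.val : V → E) = V := Subtype.range_coe
  obtain ⟨H, c, X, hP, hc, hX, hXp⟩ := exists_continuous_homogeneous_map
    (hrange ▸ interior_convexHull_nonempty_iff_affineSpan_eq_top.1 hfull)
  rw [hrange] at hP
  refine ⟨fun p ↦ (X p).1⁻¹ • (X p).2, fun p ↦ tightFace H (X p), ?_, fun p hp ↦ ⟨?_, ?_, ?_⟩,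
    fun p q hpq hp hq ↦ ?_⟩
  · exact (hX.fst.continuousOn.inv₀ fun p hp ↦ (hXp p hp).2.1.ne').smul hX.snd.continuousOn
  · exact inv_fst_smul_snd_mem_tightFace (hXp p hp).1 (hXp p hp).2.1
  · exact hP ▸ isExposed_tightFace H (X p)
  · rintro ⟨k, hk⟩ heq
    obtain ⟨v, rfl⟩ := hc k
    exact (hXp p hp).2.2 v hk (heq.ge (subset_convexHull ℝ V v.2))
  · by_contra! hne
    have hexp : IsExposed ℝ (convexHull ℝ V) (tightFace H (X p) ∩ tightFace H (X q)) :=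
      hP ▸ (isExposed_tightFace H (X p)).inter (isExposed_tightFace H (X q))
    obtain ⟨v, hv, hvp, hvq⟩ := exists_mem_of_isExposed_convexHull hV hexp hne
    exact (hpq (c ⟨v, hv⟩)).elim (fun hk ↦ (hXp p hp).2.2 ⟨v, hv⟩ hk hvp)
      fun hk ↦ (hXp q hq).2.2 ⟨v, hv⟩ hk hvq

end FaceMap

section SimplexBoundary

/-- The boundary of the standard `n`-simplex, encoded by its barycentric coordinates: the points
at least one of whose coordinates vanishes. -/
def simplexBoundary (n : ℕ) : Set (Fin (n + 1) → ℝ) :=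
  {p ∈ stdSimplex ℝ (Fin (n + 1)) | ∃ k, p k = 0}

lemma isClosed_simplexBoundary (n : ℕ) : IsClosed (simplexBoundary n) := by
  have hunion : IsClosed {p : Fin (n + 1) → ℝ | ∃ k, p k = 0} := by
    simp only [Set.ofPred_exists]
    exact isClosed_iUnion_of_finite fun k ↦
      isClosed_eq (continuous_apply k) continuous_const
  exact (isClosed_stdSimplex ℝ _).inter hunion

lemma mem_simplexBoundary_of_disjoint_supports {r n : ℕ} (hr : 2 ≤ r)
    {x : Fin r → Fin (n + 1) → ℝ} (hx : ∀ i, x i ∈ stdSimplex ℝ (Fin (n + 1)))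
    (hsupp : ∀ i j, i ≠ j → ∀ k, x i k = 0 ∨ x j k = 0) (i : Fin r) :
    x i ∈ simplexBoundary n := by
  have : Nontrivial (Fin r) := Fin.nontrivial_iff_two_le.2 hr
  obtain ⟨j, hj⟩ := exists_ne i
  obtain ⟨k, -, hk⟩ : ∃ k ∈ Finset.univ, x j k ≠ 0 :=
    Finset.exists_ne_zero_of_sum_ne_zero ((hx j).2.trans_ne one_ne_zero)
  exact ⟨hx i, k, (hsupp j i hj k).resolve_left hk⟩

end SimplexBoundary

end Tverberg

open Module in
theorem tverberg_for_polytope_boundaries_general {E F : Type*}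
    [NormedAddCommGroup E] [NormedSpace ℝ E] [FiniteDimensional ℝ E]
    [NormedAddCommGroup F] [NormedSpace ℝ F] [FiniteDimensional ℝ F]
    {r : ℕ} (hr : IsPrimePow r) (hdim : (finrank ℝ F + 1) * (r - 1) ≤ finrank ℝ E)
    {V : Set E} (hV : V.Finite) (hfull : (interior (convexHull ℝ V)).Nonempty)
    {f : frontier (convexHull ℝ V) → F} (hf : Continuous f) :
    ∃ σ : Fin r → Set E,
      (∀ i, IsExposed ℝ (convexHull ℝ V) (σ i) ∧ (σ i).Nonempty ∧ σ i ≠ convexHull ℝ V) ∧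
      (Pairwise fun i j ↦ σ i ∩ σ j = ∅) ∧
      (⋂ i, f '' {x : frontier (convexHull ℝ V) | (x : E) ∈ σ i}).Nonempty := by
  obtain ⟨ψ, face, hψ, hface, hdisjoint⟩ := Tverberg.exists_continuousOn_face_map hV hfull
  have hψ_mem {p} (hp : p ∈ Tverberg.simplexBoundary (finrank ℝ E)) :
      ψ p ∈ frontier (convexHull ℝ V) :=
    Tverberg.subset_frontier_of_isExposed (hface p hp.1).2.1 ((hface p hp.1).2.2 hp.2)
      (hface p hp.1).1
  let g : C(Tverberg.simplexBoundary (finrank ℝ E), F) :=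
    ⟨_, hf.comp ((hψ.mono fun p hp ↦ hp.1).domRestrict.subtype_mk fun p ↦ hψ_mem p.2)⟩
  have : TietzeExtension F := .of_tvs ℝ
  obtain ⟨G, hG⟩ := g.exists_restrict_eq (Tverberg.isClosed_simplexBoundary (finrank ℝ E))
  obtain ⟨x, hx, hsupp, hGx⟩ := Tverberg.topological_tverberg hr hdim G.continuous
  have hx_mem := Tverberg.mem_simplexBoundary_of_disjoint_supports hr.two_le hx hsupp
  refine ⟨fun i ↦ face (x i), fun i ↦ ?_, fun i j hij ↦ ?_, G (x ⟨0, hr.pos⟩),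
    Set.mem_iInter.2 fun i ↦ ⟨⟨ψ (x i), hψ_mem (hx_mem i)⟩, (hface _ (hx i)).1, ?_⟩⟩
  · exact ⟨(hface _ (hx i)).2.1, ⟨_, (hface _ (hx i)).1⟩, (hface _ (hx i)).2.2 (hx_mem i).2⟩
  · exact hdisjoint _ _ (hsupp i j hij) (hx i) (hx j)
  · exact (DFunLike.congr_fun hG ⟨x i, hx_mem i⟩).symm.trans (hGx _ _)

/-!
STATEMENT 11 (Tverberg theorem for boundaries of convex polytopes).
Let `r` be a prime power and `d ≥ 1`. The boundary complex of any convex polytope `P` of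
dimension `(d+1)(r-1)` (a convex hull of a finite set in `ℝ^{(d+1)(r-1)}` with non-empty
interior) admits no almost `r`-embedding into `ℝ^d`: for every continuous map `f` from the
boundary of `P` to `ℝ^d` there are pairwise disjoint proper faces `σ 0, …, σ (r-1)` of `P`
(non-empty exposed faces different from `P`) whose `f`-images have a common point.
-/
theorem tverberg_for_polytope_boundaries
    (r d : ℕ) (hr : IsPrimePow r) (hd : 1 ≤ d)
    (V : Finset (EuclideanSpace ℝ (Fin ((d + 1) * (r - 1)))))
    (P : Set (EuclideanSpace ℝ (Fin ((d + 1) * (r - 1)))))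
    (hP : P = convexHull ℝ (V : Set (EuclideanSpace ℝ (Fin ((d + 1) * (r - 1))))))
    (hfull : (interior P).Nonempty)
    (f : ↥(frontier P) → EuclideanSpace ℝ (Fin d))
    (hf : Continuous f) :
    ∃ σ : Fin r → Set (EuclideanSpace ℝ (Fin ((d + 1) * (r - 1)))),
      (∀ i, IsExposed ℝ P (σ i) ∧ (σ i).Nonempty ∧ σ i ≠ P) ∧
      (Pairwise fun i j => σ i ∩ σ j = ∅) ∧
      (⋂ i, f '' {x : ↥(frontier P) | (x : EuclideanSpace ℝ (Fin ((d + 1) * (r - 1)))) ∈ σ i}).Nonempty := by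
  subst hP
  exact tverberg_for_polytope_boundaries_general hr (by simp) V.finite_toSet hfull hf
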